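/- arXiv:2212.07974 — 2 statements merged into one kernel-verified Lean document; each statement's English description precedes it below -/
import Mathlib

section
/- Let ρ ∈ (-1, -1/2] and let N_{ρ,β,+} denote the cardinality of the set {x > 0 : φ(ρ, β, -x) = 0}. Then N_{ρ,β,+} = 1 for every β ∈ [-1, 0), and N_{ρ,β,+} = 2 for every β ∈ [2ρ, -1). -/
/-- The Wright function `φ(ρ, β, x) = ∑ x^n / (n! Γ(β + ρ n))`. -/
noncomputable def wright (ρ β x : ℝ) : ℝ :=
  ∑' n : ℕ, x ^ n / ((n.factorial : ℝ) * Real.Gamma (β + ρ * n))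

section WZHelpers
open Real Set Filter Topology


namespace WZ

noncomputable def ell (a θ : ℝ) : ℝ := (log (sin (a*θ)) - log (sin θ))/(1-a)
noncomputable def LL (a θ : ℝ) : ℝ := (a * cos (a*θ) / sin (a*θ) - cos θ / sin θ)/(1-a)
noncomputable def BB (a θ : ℝ) : ℝ := exp (ell a θ) * sin ((1-a)*θ) / sin (a*θ)
noncomputable def mm (a c θ : ℝ) : ℝ := exp (c * ell a θ) * (LL a θ * sin (c*θ) + cos (c*θ))
noncomputable def psi (a c θ : ℝ) : ℝ := c * θ - arctan (LL a θ)

lemma sin_pos_a {a θ : ℝ} (ha : 0 < a) (ha1 : a < 1) (h : θ ∈ Ioo 0 π) : 0 < sin (a*θ) := by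
  have h1 := h.1
  have h2 := h.2
  apply sin_pos_of_pos_of_lt_pi
  · positivity
  · nlinarith

lemma sin_pos_0 {θ : ℝ} (h : θ ∈ Ioo 0 π) : 0 < sin θ := sin_pos_of_pos_of_lt_pi h.1 h.2

lemma key_cot {a θ : ℝ} (ha : 0 < a) (ha1 : a < 1) (h : θ ∈ Ioo 0 π) :
    cos θ * sin (a*θ) < a * cos (a*θ) * sin θ := by
  have hd : ∀ t : ℝ, HasDerivAt (fun t => a * cos (a*t) * sin t - cos t * sin (a*t))
      ((1-a^2) * (sin (a*t) * sin t)) t := by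
    intro t
    have e1 : HasDerivAt (fun t => a * t) a t := by simpa using (hasDerivAt_id t).const_mul a
    have h1 := (((e1.cos).const_mul a).mul (hasDerivAt_sin t)).sub ((hasDerivAt_cos t).mul e1.sin)
    refine h1.congr_deriv ?_
    ring
  have hm : StrictMonoOn (fun t => a * cos (a*t) * sin t - cos t * sin (a*t)) (Icc 0 π) := by
    apply strictMonoOn_of_deriv_pos (convex_Icc 0 π)
    · exact fun t _ => (hd t).continuousAt.continuousWithinAt
    · intro t ht
      rw [interior_Icc] at ht
      rw [(hd t).deriv]
      have := sin_pos_a ha ha1 ht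
      have := sin_pos_0 ht
      have : 0 < 1 - a^2 := by nlinarith
      positivity
  have := hm (left_mem_Icc.2 pi_pos.le) (Ioo_subset_Icc_self h) h.1
  simp at this
  linarith

lemma sin_conc {a θ : ℝ} (ha : 0 < a) (ha1 : a < 1) (h : θ ∈ Ioo 0 π) :
    (1-a) * sin θ ≤ sin ((1-a)*θ) := by
  have := strictConcaveOn_sin_Icc.concaveOn.2 (left_mem_Icc.2 pi_pos.le) (Ioo_subset_Icc_self h)
    ha.le (by linarith : 0 ≤ 1 - a) (by ring)
  simpa using this

lemma LL_pos {a θ : ℝ} (ha : 0 < a) (ha1 : a < 1) (h : θ ∈ Ioo 0 π) : 0 < LL a θ := by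
  have h1 := sin_pos_a ha ha1 h
  have h2 := sin_pos_0 h
  have h3 := key_cot ha ha1 h
  unfold LL
  apply div_pos _ (by linarith)
  rw [sub_pos, div_lt_div_iff₀ h2 h1]
  exact h3

lemma hasDeriv_mul (a θ : ℝ) : HasDerivAt (fun t => a * t) a θ := by
  simpa using (hasDerivAt_id θ).const_mul a

lemma ell_deriv {a θ : ℝ} (ha : 0 < a) (ha1 : a < 1) (h : θ ∈ Ioo 0 π) :
    HasDerivAt (ell a) (LL a θ) θ := by
  have h1 := sin_pos_a ha ha1 h
  have h2 := sin_pos_0 h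
  have := ((((hasDeriv_mul a θ).sin).log h1.ne').sub ((hasDerivAt_sin θ).log h2.ne')).div_const (1-a)
  refine HasDerivAt.congr_deriv this ?_
  unfold LL
  ring

lemma LL_deriv {a θ : ℝ} (ha : 0 < a) (ha1 : a < 1) (h : θ ∈ Ioo 0 π) :
    HasDerivAt (LL a) (((1 / (sin θ)^2) - a^2 / (sin (a*θ))^2) / (1-a)) θ := by
  have h1 := sin_pos_a ha ha1 h
  have h2 := sin_pos_0 h
  have := ((((((hasDeriv_mul a θ).cos).const_mul a).div ((hasDeriv_mul a θ).sin) h1.ne')).sub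
    ((hasDerivAt_cos θ).div (hasDerivAt_sin θ) h2.ne')).div_const (1-a)
  refine HasDerivAt.congr_deriv this ?_
  have e1 := sin_sq_add_cos_sq θ
  have e2 := sin_sq_add_cos_sq (a*θ)
  have g1 : a * (-sin (a * θ) * a) * sin (a * θ) - a * cos (a * θ) * (cos (a * θ) * a) = -a^2 := by
    linear_combination (-a^2) * e2
  have g2 : -sin θ * sin θ - cos θ * cos θ = -1 := by linear_combination -e1
  rw [g1, g2]
  ring

lemma LL_deriv_le {a θ : ℝ} (ha : 0 < a) (ha1 : a < 1) (h : θ ∈ Ioo 0 π) :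
    ((1 / (sin θ)^2) - a^2 / (sin (a*θ))^2) / (1-a) ≤ 1 + (LL a θ)^2 := by
  have h1 := sin_pos_a ha ha1 h
  have h2 := sin_pos_0 h
  have h3 := sin_conc ha ha1 h
  have h4 : sin ((1-a)*θ) = sin θ * cos (a*θ) - cos θ * sin (a*θ) := by
    rw [← sin_sub]; ring_nf
  rw [h4] at h3
  have e1 := sin_sq_add_cos_sq θ
  have e2 := sin_sq_add_cos_sq (a*θ)
  unfold LL
  set s := sin θ
  set k := cos θ
  set p := sin (a*θ)
  set q := cos (a*θ)
  have h5 : 0 < 1 - a := by linarith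
  have h6 : ((1-a) * s)^2 ≤ (s*q - k*p)^2 := by
    apply pow_le_pow_left₀ (by positivity) h3
  rw [← sub_nonneg]
  have : 1 + ((a * q / p - k / s) / (1 - a)) ^ 2 - (1 / s ^ 2 - a ^ 2 / p ^ 2) / (1 - a)
     = a * ((s*q - k*p)^2 - ((1-a) * s)^2) / ((1-a)^2 * s^2*p^2) := by
    have e3 : k^2 = 1 - s^2 := by linarith
    have e4 : q^2 = 1 - p^2 := by linarith
    field_simp
    ring_nf
    simp only [e3, e4]
    ring_nf
  rw [this]
  apply div_nonneg
  · apply mul_nonneg ha.le; linarith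
  · positivity

lemma psi_mono {a c : ℝ} (ha : 0 < a) (ha1 : a < 1) (hc : 1 < c) :
    StrictMonoOn (psi a c) (Ioo 0 π) := by
  have hd : ∀ θ ∈ Ioo (0:ℝ) π, HasDerivAt (psi a c) (c - 1 / (1 + (LL a θ)^2) * (((1 / (sin θ)^2) - a^2 / (sin (a*θ))^2) / (1-a))) θ := by
    intro θ h
    exact (hasDeriv_mul c θ).sub ((LL_deriv ha ha1 h).arctan)
  apply strictMonoOn_of_deriv_pos (convex_Ioo 0 π)
  · exact fun t ht => (hd t ht).continuousAt.continuousWithinAt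
  · intro t ht
    rw [interior_Ioo] at ht
    rw [(hd t ht).deriv]
    have h1 := LL_deriv_le ha ha1 ht
    have h2 : 0 < 1 + (LL a t)^2 := by positivity
    rw [one_div_mul_eq_div]
    have := (div_le_one h2).2 h1
    linarith

lemma psi_cont {a c : ℝ} (ha : 0 < a) (ha1 : a < 1) : ContinuousOn (psi a c) (Ioo 0 π) := by
  intro θ h
  have := (hasDeriv_mul c θ).sub ((LL_deriv ha ha1 h).arctan)
  exact this.continuousAt.continuousWithinAt

lemma psi_gt {a c θ : ℝ} (hc : 1 < c) (h : θ ∈ Ioo 0 π) : c * θ - π/2 < psi a c θ := by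
  unfold psi
  linarith [arctan_lt_pi_div_two (LL a θ)]

lemma psi_lt {a c θ : ℝ} (ha : 0 < a) (ha1 : a < 1) (h : θ ∈ Ioo 0 π) : psi a c θ < c * θ := by
  unfold psi
  have := arctan_pos.2 (LL_pos ha ha1 h)
  linarith

lemma psi_lt' {a c θ : ℝ} (ha : 0 < a) (ha1 : a < 1) (h : θ ∈ Ioo 0 π) :
    psi a c θ < (c-1) * θ + π/2 := by
  unfold psi
  suffices θ - π/2 < arctan (LL a θ) by linarith
  by_cases hθ : θ ≤ π/2
  · have := arctan_pos.2 (LL_pos ha ha1 h)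
    linarith
  · push Not at hθ
    have h2 := h.2
    have e : θ - π/2 = arctan (tan (θ - π/2)) := by
      rw [arctan_tan] <;> linarith [pi_pos]
    rw [e]
    apply arctan_strictMono
    rw [tan_eq_sin_div_cos, sin_sub_pi_div_two, cos_sub_pi_div_two]
    have h1 := sin_pos_a ha ha1 h
    have h2 := sin_pos_0 h
    have h3 := key_cot ha ha1 h
    unfold LL
    rw [lt_div_iff₀ (by linarith), lt_sub_iff_add_lt, ← sub_pos]
    have h4 : 0 < sin ((1-a)*θ) := by
      apply sin_pos_a (by linarith) (by linarith) h
    have h5 : sin ((1-a)*θ) = sin θ * cos (a*θ) - cos θ * sin (a*θ) := by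
      rw [← sin_sub]; ring_nf
    have : a * cos (a * θ) / sin (a * θ) - (-cos θ / sin θ * (1 - a) + cos θ / sin θ) =
       a * sin ((1-a)*θ) / (sin θ * sin (a*θ)) := by
      rw [h5]
      field_simp
      ring
    rw [this]
    positivity

lemma mm_eq (a c θ : ℝ) : mm a c θ =
    (exp (c * ell a θ) * sqrt (1 + (LL a θ)^2)) * cos (psi a c θ) := by
  unfold mm psi
  rw [cos_sub, cos_arctan, sin_arctan]
  have : 0 < sqrt (1 + (LL a θ)^2) := by positivity
  field_simp
  ring

lemma mm_pos {a c θ : ℝ} (h : 0 < cos (psi a c θ)) : 0 < mm a c θ := by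
  rw [mm_eq]; positivity

lemma mm_neg {a c θ : ℝ} (h : cos (psi a c θ) < 0) : mm a c θ < 0 := by
  rw [mm_eq]
  apply mul_neg_of_pos_of_neg _ h
  positivity

lemma cross {a c v : ℝ} (ha : 0 < a) (ha1 : a < 1) (hc : 1 < c) (hv : 0 < v)
    (hv2 : v < c * π - π/2) : ∃ t ∈ Ioo 0 π, psi a c t = v := by
  have hp := pi_pos
  obtain ⟨x, hx0, hx⟩ : ∃ x ∈ Ioo 0 π, c * x < v := by
    refine ⟨min (π/2) (v/(2*c)), ⟨by positivity, ?_⟩, ?_⟩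
    · exact (min_le_left _ _).trans_lt (by linarith)
    · calc c * min (π/2) (v/(2*c)) ≤ c * (v/(2*c)) := by gcongr; exact min_le_right _ _
        _ = v/2 := by field_simp
        _ < v := by linarith
  obtain ⟨y, hy0, hy⟩ : ∃ y ∈ Ioo 0 π, v < c * y - π/2 := by
    refine ⟨((v+π/2)/c + π)/2, ⟨by positivity, ?_⟩, ?_⟩
    · have : (v+π/2)/c < π := by rw [div_lt_iff₀ (by linarith)]; linarith
      linarith
    · have : v + π/2 < c * (((v+π/2)/c + π)/2) := by
        have : c * (((v+π/2)/c + π)/2) = ((v + π/2) + c * π)/2 := by field_simp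
        rw [this]; linarith
      linarith
  have h1 := psi_lt (c := c) ha ha1 hx0
  have h2 := psi_gt (a := a) hc hy0
  have := (isPreconnected_Ioo).intermediate_value hx0 hy0 (psi_cont (c := c) ha ha1)
  obtain ⟨t, ht, hte⟩ := this ⟨(h1.trans hx).le, (hy.trans h2).le⟩
  exact ⟨t, ht, hte⟩

lemma mm_one {a c : ℝ} (ha : 0 < a) (ha1 : a < 1) (hc : 1 < c) (hc2 : c ≤ 2) :
    ∃ t ∈ Ioo 0 π, (∀ θ ∈ Ioo 0 t, 0 < mm a c θ) ∧ (∀ θ ∈ Ioo t π, mm a c θ < 0) := by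
  have hp := pi_pos
  obtain ⟨t, ht, hte⟩ := cross (v := π/2) ha ha1 hc (by positivity) (by nlinarith)
  refine ⟨t, ht, ?_, ?_⟩
  · intro θ hθ
    have hθ' : θ ∈ Ioo 0 π := ⟨hθ.1, hθ.2.trans ht.2⟩
    have := psi_mono ha ha1 hc hθ' ht hθ.2
    have h2 := psi_gt (a := a) hc hθ'
    have : 0 < c * θ := mul_pos (by linarith) hθ.1
    apply mm_pos
    apply cos_pos_of_mem_Ioo ⟨by linarith, by linarith⟩
  · intro θ hθ
    have hθ' : θ ∈ Ioo 0 π := ⟨ht.1.trans hθ.1, hθ.2⟩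
    have := psi_mono ha ha1 hc ht hθ' hθ.1
    have h2 := psi_lt' (c := c) ha ha1 hθ'
    have : (c-1) * θ < π := by nlinarith [hθ.2, hθ'.1]
    apply mm_neg
    apply cos_neg_of_pi_div_two_lt_of_lt (by linarith) (by linarith)

lemma mm_two {a c : ℝ} (ha : 0 < a) (ha1 : a < 1) (hc : 2 < c) (hc2 : c ≤ 3) :
    ∃ t ∈ Ioo 0 π, ∃ r ∈ Ioo t π, (∀ θ ∈ Ioo 0 t, 0 < mm a c θ) ∧ (∀ θ ∈ Ioo t r, mm a c θ < 0)
      ∧ (∀ θ ∈ Ioo r π, 0 < mm a c θ) := by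
  have hp := pi_pos
  have hc1 : 1 < c := by linarith
  obtain ⟨t, ht, hte⟩ := cross (v := π/2) ha ha1 hc1 (by positivity) (by nlinarith)
  obtain ⟨r, hr, hre⟩ := cross (v := 3*π/2) ha ha1 hc1 (by positivity) (by nlinarith)
  have htr : t < r := by
    rw [← (psi_mono ha ha1 hc1).lt_iff_lt ht hr]
    linarith
  refine ⟨t, ht, r, ⟨htr, hr.2⟩, ?_, ?_, ?_⟩
  · intro θ hθ
    have hθ' : θ ∈ Ioo 0 π := ⟨hθ.1, hθ.2.trans ht.2⟩
    have := psi_mono ha ha1 hc1 hθ' ht hθ.2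
    have h2 := psi_gt (a := a) hc1 hθ'
    have : 0 < c * θ := mul_pos (by linarith) hθ.1
    apply mm_pos
    apply cos_pos_of_mem_Ioo ⟨by linarith, by linarith⟩
  · intro θ hθ
    have hθ' : θ ∈ Ioo 0 π := ⟨ht.1.trans hθ.1, hθ.2.trans hr.2⟩
    have := psi_mono ha ha1 hc1 ht hθ' hθ.1
    have := psi_mono ha ha1 hc1 hθ' hr hθ.2
    apply mm_neg
    apply cos_neg_of_pi_div_two_lt_of_lt (by linarith) (by linarith)
  · intro θ hθ
    have hθ' : θ ∈ Ioo 0 π := ⟨hr.1.trans hθ.1, hθ.2⟩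
    have := psi_mono ha ha1 hc1 hr hθ' hθ.1
    have h2 := psi_lt' (c := c) ha ha1 hθ'
    have : (c-1) * θ < 2*π := by nlinarith [hθ.2, hθ'.1]
    apply mm_pos
    rw [← cos_sub_two_pi]
    apply cos_pos_of_mem_Ioo ⟨by linarith, by linarith⟩

lemma mm_cont {a c : ℝ} (ha : 0 < a) (ha1 : a < 1) : ContinuousOn (mm a c) (Ioo 0 π) := by
  intro θ h
  apply ContinuousAt.continuousWithinAt
  unfold mm
  have h1 := (ell_deriv ha ha1 h).continuousAt
  have h2 := (LL_deriv ha ha1 h).continuousAt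
  fun_prop

lemma BB_deriv {a θ : ℝ} (ha : 0 < a) (ha1 : a < 1) (h : θ ∈ Ioo 0 π) :
    ∃ d, 0 < d ∧ HasDerivAt (BB a) d θ := by
  have h1 := sin_pos_a ha ha1 h
  have h2 := sin_pos_0 h
  have h3 := sin_pos_a (by linarith : 0 < 1 - a) (by linarith) h
  refine ⟨_, ?_, (((ell_deriv ha ha1 h).exp).mul ((hasDeriv_mul (1-a) θ).sin)).div
    ((hasDeriv_mul a θ).sin) h1.ne'⟩
  apply div_pos _ (by positivity)
  have k1 := key_cot ha ha1 h
  have k2 := key_cot (by linarith : 0 < 1 - a) (by linarith) h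
  have hL : LL a θ = (a * cos (a*θ) / sin (a*θ) - cos θ / sin θ)/(1-a) := rfl
  set s := sin θ
  set k := cos θ
  set p := sin (a*θ)
  set q := cos (a*θ)
  set u := sin ((1-a)*θ)
  set v := cos ((1-a)*θ)
  have h5 : 0 < 1 - a := by linarith
  have : (rexp (ell a θ) * LL a θ * u + rexp (ell a θ) * (v * (1 - a))) * p -
    rexp (ell a θ) * u * (q * a) = rexp (ell a θ) / ((1-a) * s) *
      (a * u * (a * q * s - k * p) + (1-a) * p * ((1-a) * v * s - k * u)) := by
    rw [hL]
    field_simp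
    ring
  show 0 < (rexp (ell a θ) * LL a θ * u + rexp (ell a θ) * (v * (1 - a))) * p -
    rexp (ell a θ) * u * (q * a)
  rw [this]
  have : 0 < a * q * s - k * p := by linarith
  have : 0 < (1-a) * v * s - k * u := by linarith
  positivity

lemma BB_mono {a : ℝ} (ha : 0 < a) (ha1 : a < 1) : StrictMonoOn (BB a) (Ioo 0 π) := by
  apply strictMonoOn_of_deriv_pos (convex_Ioo 0 π)
  · intro t ht
    obtain ⟨d, _, hd⟩ := BB_deriv ha ha1 ht
    exact hd.continuousAt.continuousWithinAt
  · intro t ht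
    rw [interior_Ioo] at ht
    obtain ⟨d, h0, hd⟩ := BB_deriv ha ha1 ht
    rw [hd.deriv]; exact h0

lemma BB_cont {a : ℝ} (ha : 0 < a) (ha1 : a < 1) : ContinuousOn (BB a) (Ioo 0 π) := by
  intro t ht
  obtain ⟨d, _, hd⟩ := BB_deriv ha ha1 ht
  exact hd.continuousAt.continuousWithinAt

end WZ


namespace WZ
noncomputable def uu (n : ℕ) : ℝ := 1 / ((n:ℝ) + 1)
noncomputable def vv (n : ℕ) : ℝ := π - 1 / ((n:ℝ) + 1)

lemma uu_tend : Tendsto uu atTop (𝓝 0) := tendsto_one_div_add_atTop_nhds_zero_nat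
lemma vv_tend : Tendsto vv atTop (𝓝 π) := by
  have := (tendsto_const_nhds (x := π)).sub (tendsto_one_div_add_atTop_nhds_zero_nat (𝕜 := ℝ))
  rw [sub_zero] at this
  exact this
lemma uu_pos (n : ℕ) : 0 < uu n := by unfold uu; positivity
lemma vv_lt (n : ℕ) : vv n < π := by
  have := uu_pos n
  unfold uu at this
  unfold vv
  linarith
lemma uu_le (n : ℕ) : uu n ≤ 1 := by
  unfold uu
  rw [div_le_one (by positivity)]
  linarith [n.cast_nonneg (α := ℝ)]
lemma uu_le_vv (n : ℕ) : uu n ≤ vv n := by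
  have := uu_le n
  have h : vv n = π - uu n := rfl
  linarith [pi_gt_three]
lemma uu_mem (n : ℕ) : uu n ∈ Ioo 0 π := ⟨uu_pos n, (uu_le_vv n).trans_lt (vv_lt n)⟩
lemma vv_mem (n : ℕ) : vv n ∈ Ioo 0 π := ⟨(uu_pos n).trans_le (uu_le_vv n), vv_lt n⟩

lemma ii {q : ℝ → ℝ} (hq : ContinuousOn q (Ioo 0 π)) {a b : ℝ} (ha : a ∈ Ioo 0 π) (hb : b ∈ Ioo 0 π) :
    IntervalIntegrable q MeasureTheory.volume a b := by
  apply ContinuousOn.intervalIntegrable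
  apply hq.mono
  exact ordConnected_Ioo.uIcc_subset ha hb

lemma lim_ge {q : ℝ → ℝ} (hq : ContinuousOn q (Ioo 0 π)) {a b l : ℝ} (ha : a ∈ Ioo 0 π)
    (hb : b ∈ Ioo 0 π)
    (h1 : ∀ θ ∈ Ioo 0 a, 0 ≤ q θ) (h2 : ∀ θ ∈ Ioo b π, 0 ≤ q θ)
    (hl : Tendsto (fun n => ∫ θ in uu n..vv n, q θ) atTop (𝓝 l)) : ∫ θ in a..b, q θ ≤ l := by
  apply ge_of_tendsto hl
  filter_upwards [uu_tend.eventually_lt_const ha.1, vv_tend.eventually_const_lt hb.2] with n hn1 hn2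
  rw [← intervalIntegral.integral_add_adjacent_intervals (ii hq (uu_mem n) ha) (ii hq ha (vv_mem n)),
    ← intervalIntegral.integral_add_adjacent_intervals (ii hq ha hb) (ii hq hb (vv_mem n))]
  have e1 : 0 ≤ ∫ θ in uu n..a, q θ := by
    rw [intervalIntegral.integral_of_le hn1.le, MeasureTheory.integral_Ioc_eq_integral_Ioo]
    apply MeasureTheory.setIntegral_nonneg measurableSet_Ioo
    intro x hx
    exact h1 x ⟨(uu_pos n).trans hx.1, hx.2⟩
  have e2 : 0 ≤ ∫ θ in b..vv n, q θ := by
    rw [intervalIntegral.integral_of_le hn2.le, MeasureTheory.integral_Ioc_eq_integral_Ioo]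
    apply MeasureTheory.setIntegral_nonneg measurableSet_Ioo
    intro x hx
    exact h2 x ⟨hx.1, hx.2.trans (vv_lt n)⟩
  linarith

def IsL (B m F : ℝ → ℝ) : Prop := ∀ X : ℝ, 0 < X →
  Tendsto (fun n => ∫ θ in uu n..vv n, exp (-(X * B θ)) * m θ) atTop (𝓝 (F X))

variable {B m F : ℝ → ℝ}

lemma cont_e (hB : ContinuousOn B (Ioo 0 π)) (hm : ContinuousOn m (Ioo 0 π)) (X : ℝ) :
    ContinuousOn (fun θ => exp (-(X * B θ)) * m θ) (Ioo 0 π) := by fun_prop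

lemma one_aux (hB : ContinuousOn B (Ioo 0 π)) (hm : ContinuousOn m (Ioo 0 π))
    (hBm : StrictMonoOn B (Ioo 0 π)) (hF : IsL B m F) {t : ℝ} (ht : t ∈ Ioo 0 π)
    (h1 : ∀ θ ∈ Ioo 0 t, 0 < m θ) (h2 : ∀ θ ∈ Ioo t π, m θ < 0) {X Y : ℝ} (hX : 0 < X)
    (hXY : X < Y) :
    ∫ θ in (t/3)..(t/2), (exp (Y * (B t - B θ)) - exp (X * (B t - B θ))) * m θ ≤
      exp (Y * B t) * F Y - exp (X * B t) * F X := by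
  have htp := ht.1
  have htp2 := ht.2
  have hY : 0 < Y := hX.trans hXY
  have e : ∀ θ, (exp (Y * (B t - B θ)) - exp (X * (B t - B θ))) * m θ =
     exp (Y * B t) * (exp (-(Y * B θ)) * m θ) - exp (X * B t) * (exp (-(X * B θ)) * m θ) := by
    intro θ
    have k1 : Y * (B t - B θ) = Y * B t + -(Y * B θ) := by ring
    have k2 : X * (B t - B θ) = X * B t + -(X * B θ) := by ring
    rw [k1, k2, exp_add, exp_add]; ring
  have hb : t/2 ∈ Ioo 0 π := ⟨by linarith, by linarith⟩
  have hnn : ∀ θ ∈ Ioo 0 π, 0 ≤ (exp (Y * (B t - B θ)) - exp (X * (B t - B θ))) * m θ := by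
    intro θ hθ
    rcases lt_trichotomy θ t with h | h | h
    · have := hBm hθ ht h
      apply mul_nonneg _ (h1 θ ⟨hθ.1, h⟩).le
      rw [sub_nonneg, exp_le_exp]
      nlinarith
    · subst h; simp
    · have := hBm ht hθ h
      apply mul_nonneg_of_nonpos_of_nonpos _ (h2 θ ⟨h, hθ.2⟩).le
      rw [sub_nonpos, exp_le_exp]
      nlinarith
  apply lim_ge (by fun_prop) ⟨by linarith, by linarith⟩ hb
  · intro θ hθ
    exact hnn θ ⟨hθ.1, by linarith [hθ.2]⟩
  · intro θ hθ
    exact hnn θ ⟨by linarith [hθ.1], hθ.2⟩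
  · have := ((hF Y hY).const_mul (exp (Y * B t))).sub ((hF X hX).const_mul (exp (X * B t)))
    refine this.congr fun n => ?_
    simp only [e]
    rw [← intervalIntegral.integral_const_mul, ← intervalIntegral.integral_const_mul,
      ← intervalIntegral.integral_sub]
    · exact (ii (cont_e hB hm Y) (uu_mem n) (vv_mem n)).const_mul _
    · exact (ii (cont_e hB hm X) (uu_mem n) (vv_mem n)).const_mul _

lemma int_pos {q : ℝ → ℝ} (hq : ContinuousOn q (Ioo 0 π)) {a b : ℝ} (ha : a ∈ Ioo 0 π)
    (hb : b ∈ Ioo 0 π) (hab : a < b) (h : ∀ θ ∈ Ioo a b, 0 < q θ) : 0 < ∫ θ in a..b, q θ :=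
  intervalIntegral.intervalIntegral_pos_of_pos_on (ii hq ha hb) h hab

lemma one_uniq (hB : ContinuousOn B (Ioo 0 π)) (hm : ContinuousOn m (Ioo 0 π))
    (hBm : StrictMonoOn B (Ioo 0 π)) (hF : IsL B m F) {t : ℝ} (ht : t ∈ Ioo 0 π)
    (h1 : ∀ θ ∈ Ioo 0 t, 0 < m θ) (h2 : ∀ θ ∈ Ioo t π, m θ < 0) {X Y : ℝ} (hX : 0 < X)
    (hXY : X < Y) (e1 : F X = 0) (e2 : F Y = 0) : False := by
  have h := one_aux hB hm hBm hF ht h1 h2 hX hXY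
  rw [e1, e2] at h
  have htp := ht.1
  have htp2 := ht.2
  have : 0 < ∫ θ in (t/3)..(t/2), (exp (Y * (B t - B θ)) - exp (X * (B t - B θ))) * m θ := by
    apply int_pos (by fun_prop) ⟨by linarith, by linarith⟩ ⟨by linarith, by linarith⟩ (by linarith)
    intro θ hθ
    have h3 : θ ∈ Ioo 0 t := ⟨by linarith [hθ.1], by linarith [hθ.2]⟩
    have := hBm ⟨h3.1, h3.2.trans ht.2⟩ ht h3.2
    apply mul_pos _ (h1 θ h3)
    rw [sub_pos, exp_lt_exp]
    nlinarith
  linarith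

lemma one_large (hB : ContinuousOn B (Ioo 0 π)) (hm : ContinuousOn m (Ioo 0 π))
    (hBm : StrictMonoOn B (Ioo 0 π)) (hF : IsL B m F) {t : ℝ} (ht : t ∈ Ioo 0 π)
    (h1 : ∀ θ ∈ Ioo 0 t, 0 < m θ) (h2 : ∀ θ ∈ Ioo t π, m θ < 0) :
    ∀ᶠ X in atTop, 0 < F X := by
  have htp := ht.1
  have htp2 := ht.2
  have hs : t/2 ∈ Ioo 0 π := ⟨by linarith, by linarith⟩
  have hr : t/3 ∈ Ioo 0 π := ⟨by linarith, by linarith⟩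
  set d := B t - B (t/2) with hd
  have hd0 : 0 < d := sub_pos.2 (hBm hs ht (by linarith))
  set D := ∫ θ in (t/3)..(t/2), m θ with hD
  have hD0 : 0 < D := int_pos hm hr hs (by linarith) (fun θ hθ =>
    h1 θ ⟨by linarith [hθ.1], by linarith [hθ.2]⟩)
  set C := ∫ θ in (t/3)..(t/2), exp (1 * (B t - B θ)) * m θ with hC
  have key : ∀ X, 1 < X → exp (X * d) * D - C + exp (1 * B t) * F 1 ≤ exp (X * B t) * F X := by
    intro X hX
    have h := one_aux hB hm hBm hF ht h1 h2 one_pos hX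
    have : exp (X * d) * D - C ≤
       ∫ θ in (t/3)..(t/2), (exp (X * (B t - B θ)) - exp (1 * (B t - B θ))) * m θ := by
      rw [hC, hD, ← intervalIntegral.integral_const_mul, ← intervalIntegral.integral_sub]
      · apply intervalIntegral.integral_mono_on (by linarith)
        · apply ii (by fun_prop) hr hs
        · apply ii (by fun_prop) hr hs
        · intro θ hθ
          have h3 : θ ∈ Ioo 0 π := ⟨by linarith [hθ.1], by linarith [hθ.2]⟩
          have h4 : B θ ≤ B (t/2) := hBm.monotoneOn h3 hs hθ.2
          have h5 := h1 θ ⟨h3.1, by linarith [hθ.2]⟩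
          have : exp (X * d) ≤ exp (X * (B t - B θ)) := by
            rw [exp_le_exp, hd]; nlinarith
          nlinarith
      · apply ii (by fun_prop) hr hs
      · apply ii (by fun_prop) hr hs
    linarith
  have lim : Tendsto (fun X => exp (X * d) * D) atTop atTop := by
    apply Tendsto.atTop_mul_const hD0
    exact tendsto_exp_atTop.comp (tendsto_id.atTop_mul_const hd0)
  filter_upwards [lim.eventually_gt_atTop (C - exp (1 * B t) * F 1), eventually_gt_atTop 1] with X hX hX1
  have := key X hX1
  have h3 : 0 < exp (X * B t) * F X := by linarith
  exact (mul_pos_iff_of_pos_left (exp_pos _)).1 h3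

lemma two_large (hB : ContinuousOn B (Ioo 0 π)) (hm : ContinuousOn m (Ioo 0 π))
    (hBm : StrictMonoOn B (Ioo 0 π)) (hF : IsL B m F) {t r : ℝ} (ht : t ∈ Ioo 0 π) (hr : r ∈ Ioo t π)
    (h1 : ∀ θ ∈ Ioo 0 t, 0 < m θ) (h2 : ∀ θ ∈ Ioo t r, m θ < 0) (h3 : ∀ θ ∈ Ioo r π, 0 < m θ) :
    ∀ᶠ X in atTop, 0 < F X := by
  have htp := ht.1
  have htp2 := ht.2
  have hr1 := hr.1
  have hr2 := hr.2
  have hs : t/2 ∈ Ioo 0 π := ⟨by linarith, by linarith⟩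
  have hq : t/3 ∈ Ioo 0 π := ⟨by linarith, by linarith⟩
  have hr0 : r ∈ Ioo 0 π := ⟨by linarith, by linarith⟩
  set d := B t - B (t/2) with hd
  have hd0 : 0 < d := sub_pos.2 (hBm hs ht (by linarith))
  set D := ∫ θ in (t/3)..(t/2), m θ with hD
  have hD0 : 0 < D := int_pos hm hq hs (by linarith) (fun θ hθ =>
    h1 θ ⟨by linarith [hθ.1], by linarith [hθ.2]⟩)
  set C := ∫ θ in t..r, m θ with hC
  have key : ∀ X, 0 < X → exp (X * d) * D + C ≤ exp (X * B t) * F X := by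
    intro X hX
    have hc : ContinuousOn (fun θ => exp (X * (B t - B θ)) * m θ) (Ioo 0 π) := by fun_prop
    have h : ∫ θ in (t/3)..r, exp (X * (B t - B θ)) * m θ ≤ exp (X * B t) * F X := by
      apply lim_ge hc hq hr0
      · intro θ hθ
        have := h1 θ ⟨hθ.1, by linarith [hθ.2]⟩
        positivity
      · intro θ hθ
        have := h3 θ hθ
        positivity
      · refine ((hF X hX).const_mul (exp (X * B t))).congr fun n => ?_
        rw [← intervalIntegral.integral_const_mul]
        congr 1; ext θ
        rw [← mul_assoc, ← exp_add]
        ring_nf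
    rw [← intervalIntegral.integral_add_adjacent_intervals (ii hc hq ht) (ii hc ht hr0),
      ← intervalIntegral.integral_add_adjacent_intervals (ii hc hq hs) (ii hc hs ht)] at h
    have e1 : exp (X * d) * D ≤ ∫ θ in (t/3)..(t/2), exp (X * (B t - B θ)) * m θ := by
      rw [hD, ← intervalIntegral.integral_const_mul]
      apply intervalIntegral.integral_mono_on (by linarith)
      · apply ii (by fun_prop) hq hs
      · apply ii (by fun_prop) hq hs
      · intro θ hθ
        have h3 : θ ∈ Ioo 0 π := ⟨by linarith [hθ.1], by linarith [hθ.2]⟩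
        have h4 : B θ ≤ B (t/2) := hBm.monotoneOn h3 hs hθ.2
        have h5 := h1 θ ⟨h3.1, by linarith [hθ.2]⟩
        have : exp (X * d) ≤ exp (X * (B t - B θ)) := by
          rw [exp_le_exp, hd]; nlinarith
        nlinarith
    have e2 : 0 < ∫ θ in (t/2)..t, exp (X * (B t - B θ)) * m θ := by
      apply int_pos hc hs ht (by linarith)
      intro θ hθ
      have := h1 θ ⟨by linarith [hθ.1], by linarith [hθ.2]⟩
      positivity
    have e3 : C ≤ ∫ θ in t..r, exp (X * (B t - B θ)) * m θ := by
      apply intervalIntegral.integral_mono_on_of_le_Ioo (by linarith)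
      · apply ii (by fun_prop) ht hr0
      · apply ii (by fun_prop) ht hr0
      · intro θ hθ
        have h3 : θ ∈ Ioo 0 π := ⟨by linarith [hθ.1], by linarith [hθ.2]⟩
        have h4 := hBm ht h3 hθ.1
        have h5 := h2 θ hθ
        have : exp (X * (B t - B θ)) ≤ 1 := by
          rw [exp_le_one_iff]; nlinarith
        nlinarith
    linarith
  have lim : Tendsto (fun X => exp (X * d) * D) atTop atTop := by
    apply Tendsto.atTop_mul_const hD0
    exact tendsto_exp_atTop.comp (tendsto_id.atTop_mul_const hd0)
  filter_upwards [lim.eventually_gt_atTop (-C), eventually_gt_atTop 0] with X hX hX1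
  have := key X hX1
  have h3 : 0 < exp (X * B t) * F X := by linarith
  exact (mul_pos_iff_of_pos_left (exp_pos _)).1 h3

/-- a combination of two exponentials, convex with prescribed zeros -/
lemma conv_aux {u v b₁ b₂ : ℝ} (hu : 0 < u) (hv : 0 < v) (hb : b₁ < b₂) :
    ∃ x y : ℝ, (∀ b, b < b₁ → 0 < x * exp (u * b) + y * exp (-(v * b)) - 1) ∧
      (∀ b, b₁ < b → b < b₂ → x * exp (u * b) + y * exp (-(v * b)) - 1 < 0) ∧
      (∀ b, b₂ < b → 0 < x * exp (u * b) + y * exp (-(v * b)) - 1) ∧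
      x * exp (u * b₁) + y * exp (-(v * b₁)) - 1 = 0 ∧
      x * exp (u * b₂) + y * exp (-(v * b₂)) - 1 = 0 := by
  have hp : exp (u * b₁) < exp (u * b₂) := by rw [exp_lt_exp]; nlinarith
  have hq : exp (-(v * b₂)) < exp (-(v * b₁)) := by rw [exp_lt_exp]; nlinarith
  have p1 := exp_pos (u * b₁)
  have p2 := exp_pos (u * b₂)
  have q1 := exp_pos (-(v * b₁))
  have q2 := exp_pos (-(v * b₂))
  set P1 := exp (u * b₁)
  set P2 := exp (u * b₂)
  set Q1 := exp (-(v * b₁))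
  set Q2 := exp (-(v * b₂))
  have hdet : 0 < P2 * Q1 - P1 * Q2 := by nlinarith
  set x := (Q1 - Q2) / (P2 * Q1 - P1 * Q2) with hx
  set y := (P2 - P1) / (P2 * Q1 - P1 * Q2) with hy
  have hx0 : 0 < x := div_pos (by linarith) hdet
  have hy0 : 0 < y := div_pos (by linarith) hdet
  set f : ℝ → ℝ := fun b => x * exp (u * b) + y * exp (-(v * b)) - 1 with hf
  have z1 : f b₁ = 0 := by
    show x * P1 + y * Q1 - 1 = 0
    rw [hx, hy]
    have := hdet.ne'
    rw [div_mul_eq_mul_div, div_mul_eq_mul_div, ← add_div, sub_eq_zero, div_eq_one_iff_eq this]; ring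
  have z2 : f b₂ = 0 := by
    show x * P2 + y * Q2 - 1 = 0
    rw [hx, hy]
    have := hdet.ne'
    rw [div_mul_eq_mul_div, div_mul_eq_mul_div, ← add_div, sub_eq_zero, div_eq_one_iff_eq this]; ring
  have hconv : StrictConvexOn ℝ univ f := by
    have hfd : ∀ b, HasDerivAt f (x * (exp (u * b) * u) + y * (exp (-(v * b)) * (-v))) b := by
      intro b
      have e1 : HasDerivAt (fun b => u * b) u b := by simpa using (hasDerivAt_id b).const_mul u
      have e2 : HasDerivAt (fun b => -(v * b)) (-v) b := by
        have := ((hasDerivAt_id b).const_mul v).neg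
        rw [mul_one] at this
        exact this
      exact ((e1.exp.const_mul x).add (e2.exp.const_mul y)).sub_const 1
    apply StrictMono.strictConvexOn_univ_of_deriv
    · exact continuous_iff_continuousAt.2 fun b => (hfd b).continuousAt
    · intro b b' hbb
      rw [(hfd b).deriv, (hfd b').deriv]
      have : exp (u * b) < exp (u * b') := by rw [exp_lt_exp]; nlinarith
      have : exp (-(v * b')) < exp (-(v * b)) := by rw [exp_lt_exp]; nlinarith
      have : 0 < x * u := by positivity
      have : 0 < y * v := by positivity
      nlinarith
  refine ⟨x, y, ?_, ?_, ?_, z1, z2⟩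
  · intro b hb1
    have := hconv.secant_strict_mono (mem_univ b₁) (mem_univ b) (mem_univ b₂) hb1.ne hb.ne' (hb1.trans hb)
    rw [z1, z2] at this
    simp only [sub_self, zero_div, sub_zero] at this
    by_contra hcon
    push Not at hcon
    have : 0 ≤ f b / (b - b₁) := div_nonneg_of_nonpos hcon (by linarith)
    linarith
  · intro b hb1 hb2
    have := hconv.secant_strict_mono (mem_univ b₁) (mem_univ b) (mem_univ b₂) hb1.ne' hb.ne' hb2
    rw [z1, z2] at this
    simp only [sub_self, zero_div, sub_zero] at this
    by_contra hcon
    push Not at hcon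
    have : 0 ≤ f b / (b - b₁) := div_nonneg hcon (by linarith)
    linarith
  · intro b hb2
    have := hconv.secant_strict_mono (mem_univ b₁) (mem_univ b₂) (mem_univ b) hb.ne' (hb.trans hb2).ne' hb2
    rw [z1, z2] at this
    simp only [sub_self, zero_div, sub_zero] at this
    by_contra hcon
    push Not at hcon
    have : f b / (b - b₁) ≤ 0 := div_nonpos_of_nonpos_of_nonneg hcon (by linarith)
    linarith

lemma two_uniq (hB : ContinuousOn B (Ioo 0 π)) (hm : ContinuousOn m (Ioo 0 π))
    (hBm : StrictMonoOn B (Ioo 0 π)) (hF : IsL B m F) {t r : ℝ} (ht : t ∈ Ioo 0 π) (hr : r ∈ Ioo t π)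
    (h1 : ∀ θ ∈ Ioo 0 t, 0 < m θ) (h2 : ∀ θ ∈ Ioo t r, m θ < 0) (h3 : ∀ θ ∈ Ioo r π, 0 < m θ)
    {X Y Z : ℝ} (hX : 0 < X)
    (hXY : X < Y) (hYZ : Y < Z) (e1 : F X = 0) (e2 : F Y = 0) (e3 : F Z = 0) : False := by
  have htp := ht.1
  have htp2 := ht.2
  have hr1 := hr.1
  have hr2 := hr.2
  have hr0 : r ∈ Ioo 0 π := ⟨by linarith, by linarith⟩
  obtain ⟨x, y, k1, k2, k3, k4, k5⟩ := conv_aux (u := Y - X) (v := Z - Y) (by linarith) (by linarith)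
    (hBm ht hr0 hr1)
  set q : ℝ → ℝ := fun θ => exp (-(Y * B θ)) * ((x * exp ((Y-X) * B θ) + y * exp (-((Z-Y) * B θ)) - 1) * m θ) with hq
  have hqc : ContinuousOn q (Ioo 0 π) := by fun_prop
  have hpos : ∀ θ ∈ Ioo 0 t, 0 < q θ := by
    intro θ hθ
    have hθ' : θ ∈ Ioo 0 π := ⟨hθ.1, hθ.2.trans htp2⟩
    exact mul_pos (exp_pos _) (mul_pos (k1 _ (hBm hθ' ht hθ.2)) (h1 θ hθ))
  have hnn : ∀ θ ∈ Ioo 0 π, 0 ≤ q θ := by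
    intro θ hθ
    rcases lt_trichotomy θ t with h | h | h
    · exact (hpos θ ⟨hθ.1, h⟩).le
    · simp only [hq]; rw [h, k4]; simp
    · rcases lt_trichotomy θ r with h' | h' | h'
      · exact mul_nonneg (exp_pos _).le (mul_nonneg_of_nonpos_of_nonpos
          (k2 _ (hBm ht hθ h) (hBm hθ hr0 h')).le (h2 θ ⟨h, h'⟩).le)
      · simp only [hq]; rw [h', k5]; simp
      · exact mul_nonneg (exp_pos _).le (mul_nonneg (k3 _ (hBm hr0 hθ h')).le (h3 θ ⟨h', hθ.2⟩).le)
  have hp1 : t/3 ∈ Ioo 0 π := ⟨by linarith, by linarith⟩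
  have hp2 : t/2 ∈ Ioo 0 π := ⟨by linarith, by linarith⟩
  have hi : 0 < ∫ θ in (t/3)..(t/2), q θ := int_pos hqc hp1 hp2 (by linarith)
    fun θ hθ => hpos θ ⟨by linarith [hθ.1], by linarith [hθ.2]⟩
  have hle : ∫ θ in (t/3)..(t/2), q θ ≤ x * F X + y * F Z - F Y := by
    apply lim_ge hqc hp1 hp2 (fun θ hθ => hnn θ ⟨hθ.1, hθ.2.trans hp1.2⟩)
      (fun θ hθ => hnn θ ⟨hp2.1.trans hθ.1, hθ.2⟩)
    refine ((((hF X hX).const_mul x).add ((hF Z (by linarith)).const_mul y)).sub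
      (hF Y (by linarith))).congr fun n => ?_
    have i1 := ii (cont_e hB hm X) (uu_mem n) (vv_mem n)
    have i2 := ii (cont_e hB hm Y) (uu_mem n) (vv_mem n)
    have i3 := ii (cont_e hB hm Z) (uu_mem n) (vv_mem n)
    rw [← intervalIntegral.integral_const_mul, ← intervalIntegral.integral_const_mul,
      ← intervalIntegral.integral_add (i1.const_mul _) (i3.const_mul _),
      ← intervalIntegral.integral_sub ((i1.const_mul _).add (i3.const_mul _)) i2]
    congr 1; ext θ
    simp only [hq]
    have g1 : exp (-(X * B θ)) = exp (-(Y * B θ)) * exp ((Y-X) * B θ) := by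
      rw [← exp_add]; ring_nf
    have g2 : exp (-(Z * B θ)) = exp (-(Y * B θ)) * exp (-((Z-Y) * B θ)) := by
      rw [← exp_add]; ring_nf
    rw [g1, g2]; ring
  rw [e1, e2, e3] at hle
  linarith

end WZ


namespace WZ
open MeasureTheory

noncomputable def EE (a c X : ℝ) (z : ℂ) : ℂ :=
  Complex.exp (X * (Complex.exp z - Complex.exp (a * z)) + c * z)

lemma EE_norm (a c X s t : ℝ) : ‖EE a c X (s + t * Complex.I)‖ =
    exp (X * (exp s * cos t - exp (a * s) * cos (a * t)) + c * s) := by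
  unfold EE
  rw [Complex.norm_exp]
  congr 1
  simp [Complex.exp_re, Complex.exp_im]

lemma EE_norm_le {a c X : ℝ} (hX : 0 < X) (s t k : ℝ) (hk : cos t ≤ k) :
    ‖EE a c X (s + t * Complex.I)‖ ≤ exp (X * (k * exp s + exp (a * s)) + c * s) := by
  rw [EE_norm, exp_le_exp]
  have h1 : exp s * cos t ≤ k * exp s := by
    rw [mul_comm]; gcongr
  have h2 : - (exp (a * s) * cos (a * t)) ≤ exp (a * s) := by
    nlinarith [exp_pos (a * s), neg_one_le_cos (a * t)]
  have : exp s * cos t - exp (a * s) * cos (a * t) ≤ k * exp s + exp (a * s) := by linarith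
  have := mul_le_mul_of_nonneg_left this hX.le
  linarith

/-- the integrand on the upper side of the cut -/
noncomputable def gg (a c X r : ℝ) : ℝ := (EE a c X (log r + π * Complex.I)).im / r

noncomputable def bb (a c X r : ℝ) : ℝ := exp (X * r ^ a) * (r ^ (c-1) * exp (-(X * r)))

lemma young {a r : ℝ} (ha : 0 < a) (ha1 : a < 1) (hr : 0 < r) : r ^ a ≤ 1 - a + a * r := by
  have := rpow_one_add_le_one_add_mul_self (s := r - 1) (by linarith) ha.le ha1.le
  rw [add_sub_cancel] at this
  linarith

lemma bb_int {a c X : ℝ} (ha : 0 < a) (ha1 : a < 1) (hc : 0 < c) (hX : 0 < X) :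
    IntegrableOn (bb a c X) (Ioi 0) := by
  have h1 : IntegrableOn (fun x : ℝ => x ^ (c-1) * exp (- (X * (1-a)) * x ^ (1:ℝ))) (Ioi 0) :=
    integrableOn_rpow_mul_exp_neg_mul_rpow (by linarith) one_pos (mul_pos hX (by linarith))
  refine Integrable.mono' (h1.const_mul (exp (X * (1-a)))) ?_ ?_
  · apply Measurable.aestronglyMeasurable
    unfold bb
    fun_prop
  · refine (ae_restrict_iff' measurableSet_Ioi).2 (Eventually.of_forall fun r hr => ?_)
    have hr : 0 < r := hr
    have hy := young ha ha1 hr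
    unfold bb
    rw [rpow_one, norm_of_nonneg (by positivity)]
    have : exp (X * r ^ a) * exp (-(X * r)) ≤ exp (X * (1-a)) * exp (-(X * (1-a)) * r) := by
      rw [← exp_add, ← exp_add, exp_le_exp]
      nlinarith
    have hp : 0 ≤ r ^ (c-1) := by positivity
    calc _ = (exp (X * r ^ a) * exp (-(X * r))) * r ^ (c-1) := by ring
      _ ≤ (exp (X * (1-a)) * exp (-(X * (1-a)) * r)) * r ^ (c-1) := by gcongr
      _ = _ := by ring

lemma gg_le {a c X r : ℝ} (hX : 0 < X) (hr : 0 < r) :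
    ‖gg a c X r‖ ≤ bb a c X r := by
  unfold gg bb
  rw [norm_div, norm_of_nonneg hr.le, div_le_iff₀ hr]
  calc _ ≤ ‖EE a c X (log r + π * Complex.I)‖ := Complex.abs_im_le_norm _
    _ ≤ _ := EE_norm_le hX (log r) π (-1) (by simp)
    _ = _ := by
      rw [exp_log hr, mul_comm a, ← rpow_def_of_pos hr]
      have : r ^ (c-1) * r = r ^ c := by
        rw [rpow_sub_one hr.ne']; field_simp
      rw [show exp (X * r ^ a) * (r ^ (c-1) * exp (-(X * r))) * r = 
        exp (X * r ^ a) * exp (-(X * r)) * (r ^ (c-1) * r) by ring, this, rpow_def_of_pos hr c,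
        ← exp_add, ← exp_add]
      ring_nf

lemma EE_diff (a c X : ℝ) : Differentiable ℂ (EE a c X) := by
  unfold EE
  fun_prop

lemma gg_cont (a c X : ℝ) : ContinuousOn (gg a c X) (Ioi 0) := by
  have h := (EE_diff a c X).continuous
  unfold gg
  apply ContinuousOn.div _ continuousOn_id (fun x hx => (ne_of_gt hx))
  apply Complex.continuous_im.comp_continuousOn
  apply h.comp_continuousOn
  have : ContinuousOn (fun r : ℝ => log r) (Ioi 0) := continuousOn_log.mono (fun x hx => ne_of_gt hx)
  fun_prop

lemma gg_int {a c X : ℝ} (ha : 0 < a) (ha1 : a < 1) (hc : 0 < c) (hX : 0 < X) :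
    IntegrableOn (gg a c X) (Ioi 0) := by
  refine Integrable.mono' (bb_int ha ha1 hc hX) ?_ ?_
  · exact (gg_cont a c X).aestronglyMeasurable measurableSet_Ioi
  · exact (ae_restrict_iff' measurableSet_Ioi).2 (Eventually.of_forall fun r hr => gg_le hX hr)

noncomputable def FF (a c X : ℝ) (n : ℕ) (r : ℝ) : ℝ :=
  (-X) ^ n / n.factorial * sin (π * (c + a * n)) * (r ^ (c + a * n - 1) * exp (-(X * r)))

lemma exp_line {s r : ℝ} (hr : 0 < r) : (Complex.exp (s * (log r + π * Complex.I))).im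
    = r ^ s * sin (π * s) := by
  rw [Complex.exp_im]
  simp
  rw [mul_comm s, ← rpow_def_of_pos hr, mul_comm s]

lemma exp_top {r : ℝ} (hr : 0 < r) : Complex.exp (log r + π * Complex.I) = ((-r : ℝ) : ℂ) := by
  rw [Complex.exp_add, Complex.exp_pi_mul_I, ← Complex.ofReal_exp, exp_log hr]
  push_cast; ring

lemma FF_sum {a c X r : ℝ} (hr : 0 < r) : HasSum (fun n => FF a c X n r) (gg a c X r) := by
  set z : ℂ := log r + π * Complex.I with hz
  have h1 := NormedSpace.expSeries_div_hasSum_exp (-(X : ℂ) * Complex.exp (a * z))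
  rw [← Complex.exp_eq_exp_ℂ] at h1
  have h2 := h1.mul_left (Complex.exp (c * z) * ((exp (-(X * r)) / r : ℝ) : ℂ))
  have h3 := Complex.imCLM.hasSum h2
  have e1 : Complex.imCLM (Complex.exp (c * z) * ((exp (-(X * r)) / r : ℝ) : ℂ) * Complex.exp (-(X : ℂ) * Complex.exp (a * z))) = gg a c X r := by
    unfold gg EE
    rw [← hz, exp_top hr]
    have : Complex.exp (c * z) * ((exp (-(X * r)) / r : ℝ) : ℂ) * Complex.exp (-(X : ℂ) * Complex.exp (a * z)) =
      Complex.exp (X * (((-r : ℝ) : ℂ) - Complex.exp (a * z)) + c * z) * ((1 / r : ℝ) : ℂ) := by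
      push_cast
      rw [show (X:ℂ) * (-(r:ℂ) - Complex.exp (a * z)) + c * z = c * z + (-(X * r)) + (-(X : ℂ) * Complex.exp (a * z)) by ring,
        Complex.exp_add, Complex.exp_add]
      ring
    rw [this, Complex.imCLM_apply, Complex.im_mul_ofReal]
    ring
  rw [e1] at h3
  convert h3 using 2 with n
  have : Complex.exp (c * z) * ((exp (-(X * r)) / r : ℝ) : ℂ) * ((-(X : ℂ) * Complex.exp (a * z)) ^ n / n.factorial) =
      Complex.exp (((c + a * n : ℝ) : ℂ) * z) * (((-X) ^ n / n.factorial * (exp (-(X * r)) / r) : ℝ) : ℂ) := by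
    push_cast
    rw [mul_pow, ← Complex.exp_nat_mul, show ((c:ℂ) + a * n) * z = c * z + n * (a * z) by ring, Complex.exp_add]
    ring
  rw [this, Complex.imCLM_apply, Complex.im_mul_ofReal, hz, exp_line hr]
  unfold FF
  rw [rpow_sub_one hr.ne']
  ring

lemma FF_le {a c X r : ℝ} (hX : 0 < X) (hr : 0 < r) (n : ℕ) :
    ‖FF a c X n r‖ ≤ (X * r ^ a) ^ n / n.factorial * (r ^ (c-1) * exp (-(X * r))) := by
  unfold FF
  have e : r ^ (c + a * n - 1) = (r ^ a) ^ n * r ^ (c-1) := by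
    rw [← rpow_natCast, ← rpow_mul hr.le, ← rpow_add hr]
    ring_nf
  rw [e, norm_mul, norm_mul, norm_div, norm_pow, norm_neg, norm_of_nonneg hX.le]
  have h1 : ‖sin (π * (c + a * n))‖ ≤ 1 := abs_sin_le_one _
  have h2 : ‖(n.factorial : ℝ)‖ = n.factorial := by simp
  have h3 : ‖(r ^ a) ^ n * r ^ (c - 1) * rexp (-(X * r))‖ = (r ^ a) ^ n * r ^ (c - 1) * rexp (-(X * r)) :=
    norm_of_nonneg (by positivity)
  rw [h2, h3]
  calc _ ≤ X ^ n / n.factorial * 1 * ((r ^ a) ^ n * r ^ (c - 1) * rexp (-(X * r))) := by gcongr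
    _ = _ := by rw [mul_pow]; ring

lemma FF_integral {a c X : ℝ} (ha : 0 < a) (hc : 0 < c) (hX : 0 < X) (n : ℕ) :
    ∫ r in Ioi 0, FF a c X n r = π / X ^ c *
      ((-(X ^ (1-a))) ^ n / (n.factorial * Gamma ((1-c) + (-a) * n))) := by
  unfold FF
  have hs : 0 < c + a * n := by positivity
  rw [integral_const_mul, integral_rpow_mul_exp_neg_mul_Ioi hs hX]
  have hG : Gamma (c + a * n) * sin (π * (c + a * n)) = π / Gamma ((1-c) + (-a) * n) := by
    have h := Gamma_mul_Gamma_one_sub (c + a * n)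
    rw [show 1 - (c + a * n) = (1-c) + (-a) * n by ring] at h
    have hp := Gamma_pos_of_pos hs
    by_cases h0 : sin (π * (c + a * n)) = 0
    · rw [h0, div_zero] at h
      have : Gamma ((1-c) + (-a) * n) = 0 := by
        rcases mul_eq_zero.1 h with h' | h'
        · exact absurd h' hp.ne'
        · exact h'
      rw [h0, this]; simp
    · have hne : Gamma ((1-c) + (-a) * n) ≠ 0 := by
        intro h'
        rw [h', mul_zero] at h
        have := div_ne_zero pi_ne_zero h0
        exact this h.symm
      rw [eq_div_iff hne]
      rw [eq_div_iff h0] at h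
      linarith
  have hx : (-X) ^ n * (1/X) ^ (c + a * n) = (-(X ^ (1-a))) ^ n / X ^ c := by
    rw [rpow_add (by positivity), one_div, inv_rpow hX.le, inv_rpow hX.le, rpow_sub hX, rpow_one,
      rpow_mul hX.le, rpow_natCast, neg_pow X, neg_pow (X / X ^ a), div_pow]
    field_simp
  calc _ = ((-X) ^ n * (1/X) ^ (c + a * n)) / n.factorial * (Gamma (c + a * n) * sin (π * (c + a * n))) := by ring
    _ = _ := by rw [hG, hx, mul_comm (n.factorial : ℝ), ← div_div]; ring

lemma series {a c X : ℝ} (ha : 0 < a) (ha1 : a < 1) (hc : 0 < c) (hX : 0 < X) :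
    HasSum (fun n : ℕ => π / X ^ c *
      ((-(X ^ (1-a))) ^ n / (n.factorial * Gamma ((1-c) + (-a) * n)))) (∫ r in Ioi 0, gg a c X r) := by
  simp_rw [← FF_integral ha hc hX]
  have hsum : ∀ r : ℝ, HasSum (fun n : ℕ => (X * r ^ a) ^ n / n.factorial * (r ^ (c-1) * exp (-(X * r)))) (bb a c X r) := by
    intro r
    have := NormedSpace.expSeries_div_hasSum_exp (X * r ^ a)
    rw [← exp_eq_exp_ℝ] at this
    exact this.mul_right _
  apply hasSum_integral_of_dominated_convergence
    (fun n r => (X * r ^ a) ^ n / n.factorial * (r ^ (c-1) * exp (-(X * r))))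
  · intro n
    apply Measurable.aestronglyMeasurable
    unfold FF
    fun_prop
  · exact fun n => (ae_restrict_iff' measurableSet_Ioi).2 (Eventually.of_forall fun r hr => FF_le hX hr n)
  · exact Eventually.of_forall fun r => (hsum r).summable
  · simp_rw [fun r => (hsum r).tsum_eq]
    exact bb_int ha ha1 hc hX
  · exact (ae_restrict_iff' measurableSet_Ioi).2 (Eventually.of_forall fun r hr => FF_sum hr)

end WZ


namespace WZ
open MeasureTheory

lemma exp_ell {a θ : ℝ} (ha : 0 < a) (ha1 : a < 1) (h : θ ∈ Ioo 0 π) :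
    exp (a * ell a θ) * sin (a*θ) = exp (ell a θ) * sin θ := by
  have h1 := sin_pos_a ha ha1 h
  have h2 := sin_pos_0 h
  rw [← exp_log h1, ← exp_log h2, ← exp_add, ← exp_add]
  congr 1
  have : (1 - a) * ell a θ = log (sin (a*θ)) - log (sin θ) := by
    unfold ell
    have : 1 - a ≠ 0 := by linarith
    field_simp
  linarith

lemma curve_real {a θ : ℝ} (ha : 0 < a) (ha1 : a < 1) (h : θ ∈ Ioo 0 π) :
    Complex.exp (ell a θ + θ * Complex.I) - Complex.exp (a * (ell a θ + θ * Complex.I))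
      = ((-BB a θ : ℝ) : ℂ) := by
  have h1 := sin_pos_a ha ha1 h
  have e := exp_ell ha ha1 h
  apply Complex.ext
  · simp [Complex.exp_re]
    unfold BB
    have h5 : sin ((1-a)*θ) = sin θ * cos (a*θ) - cos θ * sin (a*θ) := by
      rw [← sin_sub]; ring_nf
    rw [h5]
    field_simp
    linear_combination (-cos (a*θ)) * e
  · simp [Complex.exp_im]
    linarith

lemma EE_curve {a c X θ : ℝ} (ha : 0 < a) (ha1 : a < 1) (h : θ ∈ Ioo 0 π) :
    (EE a c X (ell a θ + θ * Complex.I) * (LL a θ + Complex.I)).im =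
      exp (-(X * BB a θ)) * mm a c θ := by
  unfold EE
  rw [curve_real ha ha1 h, Complex.exp_add]
  rw [show (X : ℂ) * ((-BB a θ : ℝ) : ℂ) = ((-(X * BB a θ) : ℝ) : ℂ) by push_cast; ring,
    ← Complex.ofReal_exp, mul_assoc, Complex.im_ofReal_mul]
  congr 1
  unfold mm
  simp [Complex.exp_re, Complex.exp_im]
  ring

lemma EE_real (a c X s : ℝ) : (EE a c X (s : ℂ)).im = 0 := by
  unfold EE
  have : (X : ℂ) * (Complex.exp s - Complex.exp (a * s)) + c * s =
    ((X * (exp s - exp (a * s)) + c * s : ℝ) : ℂ) := by push_cast; rfl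
  rw [this, ← Complex.ofReal_exp, Complex.ofReal_im]

lemma vert {a c X : ℝ} {P : ℂ → ℂ} (hP : ∀ z, HasDerivAt P (EE a c X z) z) {s t t' C : ℝ} (htt : t ≤ t')
    (hC : ∀ η ∈ Icc t t', ‖EE a c X (s + η * Complex.I)‖ ≤ C) :
    |(P (s + t' * Complex.I)).im - (P (s + t * Complex.I)).im| ≤ C * (t' - t) := by
  have hd : ∀ η : ℝ, HasDerivAt (fun η : ℝ => P (s + η * Complex.I))
      (EE a c X (s + η * Complex.I) * Complex.I) η := by
    intro η
    have h1 : HasDerivAt (fun η : ℝ => (s : ℂ) + (η:ℂ) * Complex.I) Complex.I η := by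
      have := ((Complex.ofRealCLM.hasDerivAt (x := η)).mul_const Complex.I).const_add (s:ℂ)
      simpa using this
    exact (hP _).comp η h1
  have := norm_image_sub_le_of_norm_deriv_le_segment' (f := fun η : ℝ => P (s + η * Complex.I))
    (fun η _ => (hd η).hasDerivWithinAt) (C := C) (a := t) (b := t')
    (fun η hη => by
      rw [norm_mul, Complex.norm_I, mul_one]
      exact hC η (Ico_subset_Icc_self hη)) t' (right_mem_Icc.2 htt)
  rw [← Complex.sub_im]
  exact (Complex.abs_im_le_norm _).trans this

lemma ell_mono {a : ℝ} (ha : 0 < a) (ha1 : a < 1) : StrictMonoOn (ell a) (Ioo 0 π) := by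
  apply strictMonoOn_of_deriv_pos (convex_Ioo 0 π)
  · intro t ht
    exact (ell_deriv ha ha1 ht).continuousAt.continuousWithinAt
  · intro t ht
    rw [interior_Ioo] at ht
    rw [(ell_deriv ha ha1 ht).deriv]; exact LL_pos ha ha1 ht

lemma ell_tend {a : ℝ} (ha : 0 < a) (ha1 : a < 1) : Tendsto (fun n => ell a (vv n)) atTop atTop := by
  unfold ell
  apply Tendsto.atTop_div_const (by linarith)
  have h1 : Tendsto (fun n => log (sin (a * vv n))) atTop (𝓝 (log (sin (a * π)))) := by
    have hp : 0 < sin (a * π) := by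
      apply sin_pos_of_pos_of_lt_pi <;> nlinarith [pi_pos]
    have hc : ContinuousAt (fun x => log (sin (a * x))) π := by
      apply ContinuousAt.log
      · fun_prop
      · exact hp.ne'
    exact hc.tendsto.comp vv_tend
  have h2 : Tendsto (fun n => log (sin (vv n))) atTop atBot := by
    apply tendsto_log_nhdsGT_zero.comp
    apply tendsto_nhdsWithin_iff.2
    constructor
    · have := (continuous_sin.tendsto π).comp vv_tend
      rw [sin_pi] at this
      exact this
    · exact Eventually.of_forall fun n => sin_pos_0 (vv_mem n)
  have := h1.add_atTop (tendsto_neg_atBot_atTop.comp h2)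
  refine this.congr fun n => ?_
  simp [sub_eq_add_neg]

lemma tail_tend {a c X : ℝ} (ha : 0 < a) (ha1 : a < 1) (hX : 0 < X) :
    Tendsto (fun s => exp (X * (-((1+a)/2) * exp s + exp (a * s)) + c * s)) atTop (𝓝 0) := by
  have hb : 0 < X * (1-a)/2 := by
    have : 0 < 1 - a := by linarith
    positivity
  have h := ((tendsto_rpow_mul_exp_neg_mul_atTop_nhds_zero c _ hb).comp tendsto_exp_atTop).const_mul (exp (X * (1-a)))
  rw [mul_zero] at h
  refine squeeze_zero (fun s => (exp_pos _).le) (fun s => ?_) h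
  have hy := young ha ha1 (exp_pos s)
  rw [← exp_mul, mul_comm s] at hy
  simp only [Function.comp]
  rw [← exp_mul, ← exp_add, ← exp_add, exp_le_exp]
  nlinarith

theorem isL_main {a c : ℝ} (ha : 0 < a) (ha1 : a < 1) (hc : 0 < c) :
    IsL (BB a) (mm a c) (fun X => ∫ r in Ioi 0, gg a c X r) := by
  intro X hX
  obtain ⟨P, hP0, hP'⟩ := ((EE_diff a c X).isExactOn_univ).with_val_at 0 0
  have hP : ∀ z, HasDerivAt P (EE a c X z) z := fun z => hP' z (mem_univ z)
  clear hP'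
  -- P is real on the real axis
  have hreal : ∀ s : ℝ, (P s).im = 0 := by
    have hd : ∀ s : ℝ, HasDerivAt (fun s : ℝ => (P s).im) 0 s := by
      intro s
      have h1 : HasDerivAt (fun s : ℝ => P s) (EE a c X s) s := (hP s).comp_ofReal
      have h2 := (Complex.imCLM.hasFDerivAt (x := P s)).comp_hasDerivAt s h1
      have h3 : Complex.imCLM (EE a c X s) = 0 := EE_real a c X s
      rw [h3] at h2
      exact h2
    intro s
    have := is_const_of_deriv_eq_zero (fun s => (hd s).differentiableAt) (fun s => (hd s).deriv) s 0
    rw [this]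
    simp [hP0]
  -- along the curve
  have hcurve : ∀ n, ∫ θ in uu n..vv n, exp (-(X * BB a θ)) * mm a c θ =
      (P (ell a (vv n) + vv n * Complex.I)).im - (P (ell a (uu n) + uu n * Complex.I)).im := by
    intro n
    apply intervalIntegral.integral_eq_sub_of_hasDerivAt (f := fun θ : ℝ => (P (ell a θ + θ * Complex.I)).im)
    · intro θ hθ
      have hθ : θ ∈ Ioo 0 π := ordConnected_Ioo.uIcc_subset (uu_mem n) (vv_mem n) hθ
      have h1 : HasDerivAt (fun θ : ℝ => (ell a θ : ℂ) + (θ:ℂ) * Complex.I) (LL a θ + Complex.I) θ := by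
        have := ((ell_deriv ha ha1 hθ).ofReal_comp).add ((Complex.ofRealCLM.hasDerivAt (x := θ)).mul_const Complex.I)
        exact HasDerivAt.congr_deriv this (by simp)
      have h2 := (Complex.imCLM.hasFDerivAt (x := P (ell a θ + θ * Complex.I))).comp_hasDerivAt θ
        ((hP _).comp θ h1)
      have h3 : Complex.imCLM (EE a c X (ell a θ + θ * Complex.I) * (LL a θ + Complex.I)) =
        exp (-(X * BB a θ)) * mm a c θ := EE_curve ha ha1 hθ
      rw [h3] at h2
      exact h2
    · exact ii (cont_e (BB_cont ha ha1) (mm_cont ha ha1) X) (uu_mem n) (vv_mem n)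
  simp_rw [hcurve]
  -- left end
  have hleft : Tendsto (fun n => (P (ell a (uu n) + uu n * Complex.I)).im) atTop (𝓝 0) := by
    set M := exp (X * (exp (ell a 1) + exp (a * ell a 1)) + c * ell a 1)
    have h0 : Tendsto (fun n => M * uu n) atTop (𝓝 0) := by
      have := uu_tend.const_mul M
      rwa [mul_zero] at this
    refine squeeze_zero_norm (fun n => ?_) h0
    have hle : ell a (uu n) ≤ ell a 1 := (ell_mono ha ha1).monotoneOn (uu_mem n)
      ⟨one_pos, by linarith [pi_gt_three]⟩ (uu_le n)
    have := vert hP (s := ell a (uu n)) (t := 0) (t' := uu n) (C := M) (uu_pos n).le (by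
      intro η hη
      refine (EE_norm_le hX _ _ 1 (cos_le_one _)).trans ?_
      rw [exp_le_exp, one_mul]
      gcongr)
    rw [Complex.ofReal_zero, zero_mul, add_zero, hreal, sub_zero, sub_zero] at this
    exact this
  -- the top line
  have hvb : ∀ s : ℝ, |(P (s + π * Complex.I)).im| ≤ exp (X * (exp s + exp (a * s)) + c * s) * π := by
    intro s
    have := vert hP (s := s) (t := 0) (t' := π) (C := exp (X * (exp s + exp (a * s)) + c * s)) pi_pos.le (by
      intro η hη
      refine (EE_norm_le hX _ _ 1 (cos_le_one _)).trans ?_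
      rw [exp_le_exp, one_mul])
    rw [Complex.ofReal_zero, zero_mul, add_zero, hreal, sub_zero, sub_zero] at this
    exact this
  set p : ℝ → ℝ := fun r => if r = 0 then 0 else (P (log r + π * Complex.I)).im with hp
  have hpd : ∀ r ∈ Ioi (0:ℝ), HasDerivAt p (gg a c X r) r := by
    intro r hr
    have hr : 0 < r := hr
    have h1 : HasDerivAt (fun r : ℝ => (log r : ℂ) + π * Complex.I) ((r⁻¹ : ℝ) : ℂ) r :=
      ((hasDerivAt_log hr.ne').ofReal_comp).add_const _
    have h2 := (Complex.imCLM.hasFDerivAt (x := P (log r + π * Complex.I))).comp_hasDerivAt r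
        ((hP _).comp r h1)
    have h3 : Complex.imCLM (EE a c X (log r + π * Complex.I) * ((r⁻¹ : ℝ) : ℂ)) = gg a c X r := by
      rw [Complex.imCLM_apply, Complex.im_mul_ofReal]
      rfl
    rw [h3] at h2
    apply h2.congr_of_eventuallyEq
    filter_upwards [eventually_gt_nhds hr] with x hx
    simp [hp, hx.ne']
  have hpc : ContinuousWithinAt p (Ici 0) 0 := by
    have h0 : Tendsto (fun r : ℝ => exp (X * (r + r ^ a)) * r ^ c * π) (𝓝[Ici 0] 0) (𝓝 0) := by
      have : ContinuousAt (fun r : ℝ => exp (X * (r + r ^ a)) * r ^ c * π) 0 := by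
        have h1 : ContinuousAt (fun r : ℝ => r ^ a) 0 := continuousAt_rpow_const _ _ (Or.inr ha.le)
        have h2 : ContinuousAt (fun r : ℝ => r ^ c) 0 := continuousAt_rpow_const _ _ (Or.inr hc.le)
        fun_prop
      have h3 := this.tendsto
      simp only [zero_rpow hc.ne', mul_zero, zero_mul] at h3
      exact h3.mono_left nhdsWithin_le_nhds
    have hp0 : p 0 = 0 := by simp [hp]
    unfold ContinuousWithinAt
    rw [hp0]
    refine squeeze_zero_norm' ?_ h0
    filter_upwards [self_mem_nhdsWithin] with r hr
    have hr : 0 ≤ r := hr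
    rcases hr.eq_or_lt with h | h
    · rw [← h, hp0, zero_rpow hc.ne']; simp
    · simp only [hp, h.ne', if_false]
      refine (hvb (log r)).trans (le_of_eq ?_)
      rw [exp_log h, exp_add, mul_comm a, mul_comm c, ← rpow_def_of_pos h, ← rpow_def_of_pos h]
  have hlim := tendsto_limUnder_of_hasDerivAt_of_integrableOn_Ioi hpd (gg_int ha ha1 hc hX)
  have hval := integral_Ioi_of_hasDerivAt_of_tendsto hpc hpd (gg_int ha ha1 hc hX) hlim
  have hp0 : p 0 = 0 := by simp [hp]
  rw [hp0, sub_zero] at hval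
  rw [← hval] at hlim
  have htop : Tendsto (fun n => (P (ell a (vv n) + π * Complex.I)).im) atTop
      (𝓝 (∫ r in Ioi 0, gg a c X r)) := by
    refine (hlim.comp (tendsto_exp_atTop.comp (ell_tend ha ha1))).congr fun n => ?_
    simp [hp, (exp_pos _).ne']
  -- right end
  have hright : Tendsto (fun n => (P (ell a (vv n) + π * Complex.I)).im -
      (P (ell a (vv n) + vv n * Complex.I)).im) atTop (𝓝 0) := by
    have h0 := ((tail_tend (c := c) ha ha1 hX).comp (ell_tend ha ha1)).mul_const π
    rw [zero_mul] at h0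
    refine squeeze_zero_norm' ?_ h0
    have hcos : ∀ᶠ n in atTop, cos (vv n) < -((1+a)/2) := by
      have := (continuous_cos.tendsto π).comp vv_tend
      rw [cos_pi] at this
      exact this.eventually_lt_const (by linarith)
    filter_upwards [hcos] with n hn
    have hv := vv_mem n
    refine (vert hP (vv_lt n).le (C := exp (X * (-((1+a)/2) * exp (ell a (vv n)) + exp (a * ell a (vv n))) + c * ell a (vv n))) ?_).trans ?_
    · intro η hη
      apply EE_norm_le hX
      refine le_trans ?_ hn.le
      exact cos_le_cos_of_nonneg_of_le_pi hv.1.le hη.2 hη.1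
    · simp only [Function.comp]
      gcongr
      linarith [hv.1]
  have := (htop.sub hright).sub hleft
  simpa using this

end WZ


namespace WZ
open MeasureTheory

lemma rel {a c X : ℝ} (ha : 0 < a) (ha1 : a < 1) (hc : 0 < c) (hX : 0 < X) :
    ∫ r in Ioi 0, gg a c X r = π / X^c * wright (-a) (1-c) (-(X^(1-a))) := by
  rw [← (series ha ha1 hc hX).tsum_eq, tsum_mul_left, wright]

lemma pow_back {a x : ℝ} (ha1 : a < 1) (hx : 0 < x) : (x^(1/(1-a)))^(1-a) = x := by
  have : 1 - a ≠ 0 := by linarith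
  rw [← rpow_mul hx.le]; field_simp; simp

lemma zero_transfer {a c x : ℝ} (ha : 0 < a) (ha1 : a < 1) (hc : 0 < c) (hx : 0 < x)
    (h : wright (-a) (1-c) (-x) = 0) : ∫ r in Ioi 0, gg a c (x^(1/(1-a))) r = 0 := by
  rw [rel ha ha1 hc (rpow_pos_of_pos hx _), pow_back ha1 hx, h, mul_zero]

lemma pos_transfer {a c : ℝ} (ha : 0 < a) (ha1 : a < 1) (hc : 0 < c)
    (h : ∀ᶠ X in atTop, 0 < ∫ r in Ioi 0, gg a c X r) :
    ∀ᶠ x in atTop, 0 < wright (-a) (1-c) (-x) := by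
  have h1 : Tendsto (fun x : ℝ => x^(1/(1-a))) atTop atTop :=
    tendsto_rpow_atTop (by have : 0 < 1 - a := by linarith
                           positivity)
  filter_upwards [h1.eventually h, eventually_gt_atTop 0] with x hx h0
  rw [rel ha ha1 hc (rpow_pos_of_pos h0 _), pow_back ha1 h0] at hx
  have : 0 < π / (x^(1/(1-a)))^c := by positivity
  exact (pos_iff_pos_of_mul_pos hx).1 this

lemma ev_one {a c : ℝ} (ha : 0 < a) (ha1 : a < 1) (hc : 1 < c) (hc2 : c ≤ 2) :
    ∀ᶠ x in atTop, 0 < wright (-a) (1-c) (-x) := by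
  obtain ⟨t, ht, h1, h2⟩ := mm_one ha ha1 hc hc2
  exact pos_transfer ha ha1 (by linarith) (one_large (BB_cont ha ha1) (mm_cont ha ha1) (BB_mono ha ha1)
    (isL_main ha ha1 (by linarith)) ht h1 h2)

lemma ev_two {a c : ℝ} (ha : 0 < a) (ha1 : a < 1) (hc : 2 < c) (hc2 : c ≤ 3) :
    ∀ᶠ x in atTop, 0 < wright (-a) (1-c) (-x) := by
  obtain ⟨t, ht, r, hr, h1, h2, h3⟩ := mm_two ha ha1 hc hc2
  exact pos_transfer ha ha1 (by linarith) (two_large (BB_cont ha ha1) (mm_cont ha ha1) (BB_mono ha ha1)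
    (isL_main ha ha1 (by linarith)) ht hr h1 h2 h3)

lemma pow_lt {a x y : ℝ} (ha1 : a < 1) (hx : 0 < x) (h : x < y) : x^(1/(1-a)) < y^(1/(1-a)) :=
  rpow_lt_rpow hx.le h (by have : 0 < 1 - a := by linarith
                           positivity)

lemma un_one {a c x y : ℝ} (ha : 0 < a) (ha1 : a < 1) (hc : 1 < c) (hc2 : c ≤ 2) (hx : 0 < x)
    (hxy : x < y) (e1 : wright (-a) (1-c) (-x) = 0) (e2 : wright (-a) (1-c) (-y) = 0) : False := by
  obtain ⟨t, ht, h1, h2⟩ := mm_one ha ha1 hc hc2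
  exact one_uniq (BB_cont ha ha1) (mm_cont ha ha1) (BB_mono ha ha1)
    (isL_main ha ha1 (by linarith : 0 < c)) ht h1 h2 (rpow_pos_of_pos hx _) (pow_lt ha1 hx hxy)
    (zero_transfer ha ha1 (by linarith) hx e1)
    (zero_transfer ha ha1 (by linarith) (hx.trans hxy) e2)

lemma un_two {a c x y z : ℝ} (ha : 0 < a) (ha1 : a < 1) (hc : 2 < c) (hc2 : c ≤ 3) (hx : 0 < x)
    (hxy : x < y) (hyz : y < z) (e1 : wright (-a) (1-c) (-x) = 0)
    (e2 : wright (-a) (1-c) (-y) = 0) (e3 : wright (-a) (1-c) (-z) = 0) : False := by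
  obtain ⟨t, ht, r, hr, h1, h2, h3⟩ := mm_two ha ha1 hc hc2
  exact two_uniq (BB_cont ha ha1) (mm_cont ha ha1) (BB_mono ha ha1)
    (isL_main ha ha1 (by linarith : 0 < c)) ht hr h1 h2 h3 (rpow_pos_of_pos hx _) (pow_lt ha1 hx hxy)
    (pow_lt ha1 (hx.trans hxy) hyz)
    (zero_transfer ha ha1 (by linarith) hx e1)
    (zero_transfer ha ha1 (by linarith) (hx.trans hxy) e2)
    (zero_transfer ha ha1 (by linarith) ((hx.trans hxy).trans hyz) e3)

/-- coefficients -/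
noncomputable def cf (a b : ℝ) (n : ℕ) : ℝ := 1 / ((n.factorial : ℝ) * Real.Gamma (b + (-a) * n))

lemma wright_cf (a b y : ℝ) : wright (-a) b y = ∑' n : ℕ, cf a b n * y^n := by
  unfold wright cf
  congr 1; ext n; ring

lemma summ_abs {a b : ℝ} (ha : 0 < a) (ha1 : a < 1) (hb : b < 1) {R : ℝ} (hR : 0 < R) :
    Summable (fun n : ℕ => |cf a b n| * R^n) := by
  have h := (series ha ha1 (by linarith : 0 < 1 - b) (rpow_pos_of_pos hR (1/(1-a)))).summable
  rw [pow_back ha1 hR] at h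
  have h0 : π / (R^(1/(1-a)))^(1-b) ≠ 0 := by positivity
  rw [summable_mul_left_iff h0] at h
  have h2 := h.abs
  refine h2.congr (fun n => ?_)
  unfold cf
  rw [abs_div, abs_pow, abs_neg, abs_of_pos hR, abs_div, abs_one]
  simp only [sub_sub_cancel]
  ring

lemma summ {a b : ℝ} (ha : 0 < a) (ha1 : a < 1) (hb : b < 1) (y : ℝ) :
    Summable (fun n : ℕ => cf a b n * y^n) := by
  refine Summable.of_norm_bounded (summ_abs ha ha1 hb (by positivity : 0 < |y| + 1)) (fun n => ?_)
  rw [norm_mul, norm_pow, Real.norm_eq_abs, Real.norm_eq_abs]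
  gcongr; linarith

lemma dbound {a b R : ℝ} (hR : 1 ≤ R) {y : ℝ} (hy : |y| ≤ R) (n : ℕ) :
    ‖cf a b n * (n * y^(n-1))‖ ≤ |cf a b n| * (2*R)^n := by
  rw [norm_mul, norm_mul, norm_pow, Real.norm_eq_abs, Real.norm_eq_abs, Real.norm_eq_abs, mul_pow]
  have h1 : |(n:ℝ)| ≤ 2^n := by
    rw [abs_of_nonneg (by positivity)]
    exact_mod_cast n.lt_two_pow_self.le
  have h2 : |y|^(n-1) ≤ R^n :=
    (pow_le_pow_left₀ (abs_nonneg _) hy _).trans (pow_le_pow_right₀ hR (by omega))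
  gcongr

lemma summ_d {a b : ℝ} (ha : 0 < a) (ha1 : a < 1) (hb : b < 1) (y : ℝ) :
    Summable (fun n : ℕ => cf a b n * (n * y^(n-1))) :=
  Summable.of_norm_bounded (summ_abs ha ha1 hb (by positivity : 0 < 2*(|y| + 1)))
    (dbound (by linarith [abs_nonneg y]) (by linarith))

/-- derivative -/
noncomputable def wd (a b y : ℝ) : ℝ := ∑' n : ℕ, cf a b n * (n * y^(n-1))

lemma wright_deriv {a b : ℝ} (ha : 0 < a) (ha1 : a < 1) (hb : b < 1) (y : ℝ) :
    HasDerivAt (fun y => wright (-a) b y) (wd a b y) y := by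
  have e : (fun y => wright (-a) b y) = fun y => ∑' n : ℕ, cf a b n * y^n := by
    ext y; exact wright_cf a b y
  rw [e]
  have hy : y ∈ Metric.ball (0:ℝ) (|y|+1) := by simp
  refine hasDerivAt_tsum_of_isPreconnected (g := fun n y => cf a b n * y^n)
    (g' := fun n y => cf a b n * (n * y^(n-1)))
    (summ_abs ha ha1 hb (by positivity : 0 < 2*(|y| + 1)))
    Metric.isOpen_ball (convex_ball (0:ℝ) (|y|+1)).isPreconnected ?_ ?_ hy (summ ha ha1 hb y) hy
  · intro n z _
    exact (hasDerivAt_pow n z).const_mul _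
  · intro n z hz
    refine dbound (by linarith [abs_nonneg y]) ?_ n
    simp at hz; exact hz.le

lemma wright_zero (a b : ℝ) : wright (-a) b 0 = 1 / Gamma b := by
  rw [wright_cf, tsum_eq_single 0]
  · simp [cf]
  · intro n hn; simp [hn]

lemma wd_zero (a b : ℝ) : wd a b 0 = 1 / Gamma (b - a) := by
  rw [wd, tsum_eq_single 1]
  · simp [cf, sub_eq_add_neg]
  · intro n hn
    rcases n with _ | n
    · simp
    · have : n ≠ 0 := by rintro rfl; simp at hn
      simp [this]

lemma inv_gamma (z : ℝ) : 1 / Gamma z = z / Gamma (z+1) := by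
  by_cases h : z = 0
  · subst h; simp [Real.Gamma_zero]
  · rw [Real.Gamma_add_one h]
    by_cases h2 : Gamma z = 0
    · simp [h2]
    · field_simp

lemma recur {a b : ℝ} (ha : 0 < a) (ha1 : a < 1) (hb : b < 0) (y : ℝ) :
    wright (-a) b y = b * wright (-a) (b+1) y - a * y * wd a (b+1) y := by
  rw [wright_cf, wright_cf, wd, ← tsum_mul_left, ← tsum_mul_left,
    ← ((summ ha ha1 (by linarith : b + 1 < 1) y).mul_left b).tsum_sub
      ((summ_d ha ha1 (by linarith : b + 1 < 1) y).mul_left (a*y))]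
  congr 1; ext n
  have h1 := inv_gamma (b + -a * n)
  have h2 : cf a b n = (b + -a*n) * cf a (b+1) n := by
    unfold cf
    rw [show b + 1 + -a * n = b + -a*n + 1 by ring, one_div, mul_inv, ← one_div (Gamma _), h1]
    rw [one_div, mul_inv]; ring
  rw [h2]
  rcases n with _ | n
  · simp
  · simp only [Nat.add_sub_cancel]; rw [pow_succ]; ring

lemma wcont {a b : ℝ} (ha : 0 < a) (ha1 : a < 1) (hb : b < 1) :
    Continuous (fun x => wright (-a) b (-x)) := by
  have : Continuous (fun y => wright (-a) b y) :=
    continuous_iff_continuousAt.2 fun y => (wright_deriv ha ha1 hb y).continuousAt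
  exact this.comp continuous_neg

lemma gamma_neg1 {b : ℝ} (h1 : -1 < b) (h2 : b < 0) : Gamma b < 0 := by
  have h := Real.Gamma_add_one h2.ne
  have : 0 < Gamma (b+1) := Gamma_pos_of_pos (by linarith)
  rw [h] at this
  by_contra hh
  nlinarith

lemma gamma_pos2 {b : ℝ} (h1 : -2 < b) (h2 : b < -1) : 0 < Gamma b := by
  have h := Real.Gamma_add_one (by linarith : b ≠ 0)
  have : Gamma (b+1) < 0 := gamma_neg1 (by linarith) (by linarith)
  rw [h] at this
  by_contra hh
  nlinarith

lemma near_neg {a b : ℝ} (ha : 0 < a) (ha1 : a < 1) (hb : -1 ≤ b) (hb0 : b < 0) {d : ℝ} (hd : 0 < d) :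
    ∃ x, 0 < x ∧ x < d ∧ wright (-a) b (-x) < 0 := by
  have : ∀ᶠ x in 𝓝[>] (0:ℝ), wright (-a) b (-x) < 0 := by
    rcases hb.lt_or_eq with h | h
    · have h0 : wright (-a) b (-0) < 0 := by
        rw [neg_zero, wright_zero]; exact one_div_neg.2 (gamma_neg1 h hb0)
      exact (((wcont ha ha1 (by linarith)).tendsto 0).eventually_lt_const h0).filter_mono nhdsWithin_le_nhds
    · subst h
      have h1 : HasDerivAt (fun x => wright (-a) (-1) (-x)) (-wd a (-1) 0) 0 := by
        have := (wright_deriv ha ha1 (by norm_num : (-1:ℝ) < 1) (-0)).comp 0 (hasDerivAt_neg (0:ℝ))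
        refine HasDerivAt.congr_deriv this ?_
        simp
      have h2 : -wd a (-1) 0 < 0 := by
        rw [wd_zero]
        have := one_div_pos.2 (gamma_pos2 (by linarith : -2 < -1 - a) (by linarith))
        linarith
      have h3 := (hasDerivAt_iff_tendsto_slope.1 h1).eventually_lt_const h2
      have h4 := h3.filter_mono (nhdsWithin_mono (0:ℝ) (fun x (hx : 0 < x) => hx.ne') : 𝓝[>] (0:ℝ) ≤ _)
      filter_upwards [h4, self_mem_nhdsWithin] with x hx h0
      have h0 : 0 < x := h0
      have hg : Gamma (-1:ℝ) = 0 := by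
        have := Real.Gamma_neg_nat_eq_zero 1
        simpa using this
      have e0 : wright (-a) (-1) 0 = 0 := by rw [wright_zero, hg]; simp
      rw [slope_def_field] at hx
      simp only [neg_zero, e0, sub_zero] at hx
      by_contra hh
      push Not at hh
      have := div_nonneg hh h0.le
      linarith
  obtain ⟨x, h1, h2, h3⟩ := (this.and (Ioo_mem_nhdsGT hd)).exists
  exact ⟨x, h2, h3, h1⟩

lemma ivt_up {f : ℝ → ℝ} (hf : Continuous f) {p q : ℝ} (h : p < q) (h1 : f p < 0) (h2 : 0 < f q) :
    ∃ z, p < z ∧ z < q ∧ f z = 0 := by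
  obtain ⟨z, hz, e⟩ := intermediate_value_Ioo h.le hf.continuousOn ⟨h1, h2⟩
  exact ⟨z, hz.1, hz.2, e⟩

lemma ivt_down {f : ℝ → ℝ} (hf : Continuous f) {p q : ℝ} (h : p < q) (h1 : 0 < f p) (h2 : f q < 0) :
    ∃ z, p < z ∧ z < q ∧ f z = 0 := by
  obtain ⟨z, hz, e⟩ := intermediate_value_Ioo' h.le hf.continuousOn ⟨h2, h1⟩
  exact ⟨z, hz.1, hz.2, e⟩

lemma ex_one {a b : ℝ} (ha : 0 < a) (ha1 : a < 1) (hb : -1 ≤ b) (hb0 : b < 0) :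
    ∃ x, 0 < x ∧ wright (-a) b (-x) = 0 := by
  obtain ⟨p, h0, -, h1⟩ := near_neg ha ha1 hb hb0 one_pos
  have h2 := ev_one ha ha1 (c := 1 - b) (by linarith) (by linarith)
  obtain ⟨q, hq, h3⟩ := (h2.and (eventually_gt_atTop p)).exists
  rw [sub_sub_cancel] at hq
  obtain ⟨z, hz, -, e⟩ := ivt_up (wcont ha ha1 (by linarith)) h3 h1 hq
  exact ⟨z, h0.trans hz, e⟩

lemma ex_neg {a b : ℝ} (ha : 0 < a) (ha1 : a < 1) (hb : -2 < b) (hb0 : b < -1) :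
    ∃ x, 0 < x ∧ wright (-a) b (-x) < 0 := by
  obtain ⟨x0, hx0, e0⟩ := ex_one ha ha1 (b := b+1) (by linarith) (by linarith)
  by_contra hcon
  push Not at hcon
  obtain ⟨p, hp, hpx, hpn⟩ := near_neg ha ha1 (b := b+1) (by linarith) (by linarith) hx0
  have hd : ∀ x, 0 < x → HasDerivAt (fun x => x^(-b/a) * wright (-a) (b+1) (-x))
      (-(1/a) * x^(-b/a-1) * wright (-a) b (-x)) x := by
    intro x hx
    have h1 : HasDerivAt (fun x => wright (-a) (b+1) (-x)) (wd a (b+1) (-x) * (-1)) x :=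
      (wright_deriv ha ha1 (by linarith : b+1 < 1) (-x)).comp x (hasDerivAt_neg x)
    have h2 := (Real.hasDerivAt_rpow_const (x := x) (p := -b/a) (Or.inl hx.ne')).mul h1
    refine HasDerivAt.congr_deriv h2 ?_
    rw [recur ha ha1 (by linarith : b < 0) (-x)]
    have h3 : x^(-b/a) = x^(-b/a-1) * x := by
      rw [← rpow_add_one hx.ne']; ring_nf
    rw [h3]
    field_simp
    ring
  have hanti : AntitoneOn (fun x => x^(-b/a) * wright (-a) (b+1) (-x)) (Icc p x0) := by
    apply antitoneOn_of_deriv_nonpos (convex_Icc _ _)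
    · intro x hx
      exact (hd x (hp.trans_le hx.1)).continuousAt.continuousWithinAt
    · intro x hx
      rw [interior_Icc] at hx
      exact (hd x (hp.trans hx.1)).differentiableAt.differentiableWithinAt
    · intro x hx
      rw [interior_Icc] at hx
      have hx0 := hp.trans hx.1
      rw [(hd x hx0).deriv]
      have := hcon x hx0
      have h4 : 0 < (1/a) * x^(-b/a-1) := by positivity
      nlinarith
  have := hanti (left_mem_Icc.2 hpx.le) (right_mem_Icc.2 hpx.le) hpx.le
  simp only [e0, mul_zero] at this
  have h5 : 0 < p^(-b/a) := by positivity
  nlinarith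

lemma card_one {a b : ℝ} (ha : 0 < a) (ha1 : a < 1) (hb : -1 ≤ b) (hb0 : b < 0) :
    {x : ℝ | 0 < x ∧ wright (-a) b (-x) = 0}.ncard = 1 := by
  obtain ⟨z, hz, e⟩ := ex_one ha ha1 hb hb0
  have hu : ∀ x y, 0 < x → x < y → wright (-a) b (-x) = 0 → wright (-a) b (-y) = 0 → False := by
    intro x y hx hxy e1 e2
    exact un_one (c := 1 - b) ha ha1 (by linarith) (by linarith) hx hxy
      (by rwa [sub_sub_cancel]) (by rwa [sub_sub_cancel])
  rw [Set.ncard_eq_one]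
  refine ⟨z, ?_⟩
  ext x
  simp only [mem_setOf_eq, mem_singleton_iff]
  constructor
  · rintro ⟨h0, h⟩
    rcases lt_trichotomy x z with h1 | h1 | h1
    · exact (hu x z h0 h1 h e).elim
    · exact h1
    · exact (hu z x hz h1 e h).elim
  · rintro rfl; exact ⟨hz, e⟩

lemma card_two {a b : ℝ} (ha : 0 < a) (ha1 : a < 1) (hb : -2 < b) (hb0 : b < -1) :
    {x : ℝ | 0 < x ∧ wright (-a) b (-x) = 0}.ncard = 2 := by
  obtain ⟨p, hp, hn⟩ := ex_neg ha ha1 hb hb0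
  have hc := wcont ha ha1 (by linarith : b < 1)
  have h2 := ev_two ha ha1 (c := 1 - b) (by linarith) (by linarith)
  obtain ⟨q, hq, h3⟩ := (h2.and (eventually_gt_atTop p)).exists
  rw [sub_sub_cancel] at hq
  have h0 : 0 < wright (-a) b (-0) := by
    rw [neg_zero, wright_zero]; exact one_div_pos.2 (gamma_pos2 hb hb0)
  obtain ⟨z, hz, hzp, e⟩ := ivt_down hc hp h0 hn
  obtain ⟨w, hw, -, e'⟩ := ivt_up hc h3 hn hq
  have hzw := hzp.trans hw
  have hu : ∀ x y v, 0 < x → x < y → y < v → wright (-a) b (-x) = 0 → wright (-a) b (-y) = 0 →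
      wright (-a) b (-v) = 0 → False := by
    intro x y v hx hxy hyv e1 e2 e3
    exact un_two (c := 1 - b) ha ha1 (by linarith) (by linarith) hx hxy hyv
      (by rwa [sub_sub_cancel]) (by rwa [sub_sub_cancel]) (by rwa [sub_sub_cancel])
  rw [Set.ncard_eq_two]
  refine ⟨z, w, hzw.ne, ?_⟩
  ext x
  simp only [mem_setOf_eq, mem_insert_iff, mem_singleton_iff]
  constructor
  · rintro ⟨h0, h⟩
    rcases lt_trichotomy x z with h1 | h1 | h1
    · exact (hu x z w h0 h1 hzw h e e').elim
    · exact Or.inl h1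
    · rcases lt_trichotomy x w with h4 | h4 | h4
      · exact (hu z x w hz h1 h4 e h e').elim
      · exact Or.inr h4
      · exact (hu z w x hz hzw h4 e e' h).elim
  · rintro (rfl | rfl)
    · exact ⟨hz, e⟩
    · exact ⟨hz.trans hzw, e'⟩

end WZ

end WZHelpers

/-- Proposition 2: for `ρ ∈ (-1, -1/2]`, the Wright function `x ↦ φ(ρ, β, -x)` has
exactly one positive zero when `β ∈ [-1, 0)` and exactly two when `β ∈ [2ρ, -1)`. -/
theorem wright_positive_zeroes (ρ : ℝ) (hρ : ρ ∈ Set.Ioc (-1 : ℝ) (-1/2 : ℝ)) (β : ℝ) :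
    (β ∈ Set.Ico (-1 : ℝ) 0 →
      {x : ℝ | 0 < x ∧ wright ρ β (-x) = 0}.ncard = 1) ∧
    (β ∈ Set.Ico (2 * ρ) (-1 : ℝ) →
      {x : ℝ | 0 < x ∧ wright ρ β (-x) = 0}.ncard = 2) := by
  have ha : 0 < -ρ := by linarith [hρ.2]
  have ha1 : -ρ < 1 := by linarith [hρ.1]
  refine ⟨fun h => ?_, fun h => ?_⟩
  · have := WZ.card_one ha ha1 h.1 h.2
    rwa [neg_neg] at this
  · have := WZ.card_two ha ha1 (by linarith [h.1, hρ.1] : -2 < β) h.2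
    rwa [neg_neg] at this
end

section
/- For every α ∈ (0,1), every β ≥ 0 and every x ≥ 0, one has the Turán-type inequality φ(-α, β + α, -x) · φ(-α, β − α, -x) ≤ φ(-α, β, -x)². -/
open Finset

/-- increments of a sequence -/
def wtInc (R : ℕ → ℝ) : ℕ → ℝ
  | 0 => R 0
  | (a+1) => R (a+1) - R a

lemma wt_inc_nonneg {R : ℕ → ℝ} (h : Monotone R) (h0 : 0 ≤ R 0) (a : ℕ) : 0 ≤ wtInc R a := by
  cases a with
  | zero => exact h0
  | succ a => exact sub_nonneg.2 (h (Nat.le_succ a))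

lemma wt_inc_sum (R : ℕ → ℝ) (i : ℕ) : ∑ a ∈ range (i+1), wtInc R a = R i := by
  induction i with
  | zero => simp [wtInc]
  | succ i ih => rw [sum_range_succ, ih]; simp [wtInc]

lemma wt_abel (q R : ℕ → ℝ) (M : ℕ) :
    ∑ i ∈ range M, q i * R i = ∑ a ∈ range M, wtInc R a * ∑ i ∈ Ico a M, q i := by
  have : ∀ i ∈ range M, q i * R i = ∑ a ∈ range M, if a ≤ i then wtInc R a * q i else 0 := by
    intro i hi
    rw [← wt_inc_sum R i, mul_sum, ← sum_filter]
    apply sum_congr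
    · ext a; simp at hi ⊢; omega
    · intros; ring
  rw [sum_congr rfl this, sum_comm]
  apply sum_congr rfl
  intro a ha
  rw [mul_sum, ← sum_filter]
  apply sum_congr
  · ext i; simp; omega
  · intros; rfl

lemma wt_abel_tail (q f : ℕ → ℝ) (M a : ℕ) :
    ∑ i ∈ Ico a M, q i * f i = ∑ k ∈ range M, wtInc f k * ∑ i ∈ Ico (max k a) M, q i := by
  have h := wt_abel (fun i => if a ≤ i then q i else 0) f M
  have e1 : ∑ i ∈ range M, (if a ≤ i then q i else 0) * f i = ∑ i ∈ Ico a M, q i * f i := by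
    simp only [ite_mul, zero_mul]
    rw [← sum_filter]
    apply sum_congr
    · ext i; simp; omega
    · intros; rfl
  rw [← e1, h]
  apply sum_congr rfl
  intro k _
  rw [← sum_filter]
  congr 1
  apply sum_congr
  · ext i; simp
  · intros; rfl

lemma wt_cross (Q Q' : ℕ → ℝ) (hQ : ∀ b, 0 ≤ Q b)
    (hQa : Antitone Q)
    (h : ∀ a b, a ≤ b → Q' b * Q a ≤ Q' a * Q b) (hs : ∀ b, Q b = 0 → Q' b = 0)
    (a i k : ℕ) (hik : i ≤ k) :
    Q' (max i a) * Q k + Q' (max k a) * Q i ≤ Q (max i a) * Q' k + Q (max k a) * Q' i := by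
  rcases le_total k a with hk | hk
  · rw [max_eq_right hk, max_eq_right (hik.trans hk)]
    linarith [h k a hk, h i a (hik.trans hk)]
  · rw [max_eq_left hk]
    rcases le_total a i with hi | hi
    · rw [max_eq_left hi]; linarith
    · rw [max_eq_right hi]
      rcases (hQ k).eq_or_lt with h0 | h0
      · rw [hs k h0.symm, ← h0]; simp
      · have ha : 0 < Q a := lt_of_lt_of_le h0 (hQa hk)
        have hai : Q a ≤ Q i := hQa hi
        have h1 := h i a hi
        have h2 := h a k hk
        have h3 := h i k hik
        -- multiply by Q a
        have : 0 ≤ Q a * (Q a * Q' k + Q k * Q' i - (Q' a * Q k + Q' k * Q i)) := by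
          nlinarith [mul_nonneg (sub_nonneg.2 hai) (sub_nonneg.2 h2), mul_nonneg h0.le (sub_nonneg.2 h1)]
        have := nonneg_of_mul_nonneg_right this ha
        linarith

lemma wt_hr (q q' f : ℕ → ℝ) (M : ℕ) (hq : ∀ i, 0 ≤ q i)
    (h : ∀ a b, a ≤ b → (∑ i ∈ Ico b M, q' i) * (∑ i ∈ Ico a M, q i) ≤
      (∑ i ∈ Ico a M, q' i) * (∑ i ∈ Ico b M, q i))
    (hs : ∀ b, ∑ i ∈ Ico b M, q i = 0 → ∑ i ∈ Ico b M, q' i = 0)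
    (hf : Monotone f) (hf0 : 0 ≤ f 0) (a : ℕ) :
    (∑ i ∈ Ico a M, q' i * f i) * (∑ i ∈ range M, q i * f i) ≤
      (∑ i ∈ range M, q' i * f i) * (∑ i ∈ Ico a M, q i * f i) := by
  rw [wt_abel_tail q, wt_abel_tail q', wt_abel q, wt_abel q']
  set Q := fun b => ∑ i ∈ Ico b M, q i with hQdef
  set Q' := fun b => ∑ i ∈ Ico b M, q' i with hQ'def
  have hQ : ∀ b, 0 ≤ Q b := fun b => sum_nonneg fun i _ => hq i
  have hQa : Antitone Q := by
    intro a b hab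
    apply sum_le_sum_of_subset_of_nonneg
    · exact Ico_subset_Ico_left hab
    · intros; exact hq _
  set d := wtInc f
  have hd : ∀ k, 0 ≤ d k := wt_inc_nonneg hf hf0
  change (∑ k ∈ range M, d k * Q' (max k a)) * (∑ k ∈ range M, d k * Q k) ≤
    (∑ k ∈ range M, d k * Q' k) * (∑ k ∈ range M, d k * Q (max k a))
  have key : ∀ i k, d i * d k * (Q' (max i a) * Q k + Q' (max k a) * Q i) ≤
      d i * d k * (Q (max i a) * Q' k + Q (max k a) * Q' i) := by
    intro i k
    apply mul_le_mul_of_nonneg_left _ (mul_nonneg (hd i) (hd k))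
    rcases le_total i k with hik | hik
    · exact wt_cross Q Q' hQ hQa h hs a i k hik
    · have := wt_cross Q Q' hQ hQa h hs a k i hik
      linarith
  have tot := sum_le_sum fun i (_ : i ∈ range M) => sum_le_sum fun k (_ : k ∈ range M) => key i k
  have e1 : ∀ U V : ℕ → ℝ, ∑ i ∈ range M, ∑ k ∈ range M, d i * d k * (U i * V k + U k * V i) =
      2 * ((∑ k ∈ range M, d k * U k) * (∑ k ∈ range M, d k * V k)) := by
    intro U V
    have : ∑ i ∈ range M, ∑ k ∈ range M, d i * d k * (U i * V k + U k * V i) =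
      ∑ i ∈ range M, ∑ k ∈ range M, (d i * U i) * (d k * V k) +
      ∑ i ∈ range M, ∑ k ∈ range M, (d i * V i) * (d k * U k) := by
      rw [← sum_add_distrib]
      apply sum_congr rfl; intro i _
      rw [← sum_add_distrib]
      apply sum_congr rfl; intro i _
      ring
    rw [this, ← sum_mul_sum, ← sum_mul_sum]; ring
  rw [e1 (fun i => Q' (max i a)) Q, e1 (fun i => Q (max i a)) Q'] at tot
  linarith

lemma wt_hr2 (q q' f R : ℕ → ℝ) (M : ℕ) (hq : ∀ i, 0 ≤ q i)
    (h : ∀ a b, a ≤ b → (∑ i ∈ Ico b M, q' i) * (∑ i ∈ Ico a M, q i) ≤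
      (∑ i ∈ Ico a M, q' i) * (∑ i ∈ Ico b M, q i))
    (hs : ∀ b, ∑ i ∈ Ico b M, q i = 0 → ∑ i ∈ Ico b M, q' i = 0)
    (hf : Monotone f) (hf0 : 0 ≤ f 0) (hR : Monotone R) (hR0 : 0 ≤ R 0) :
    (∑ i ∈ range M, q' i * f i * R i) * (∑ i ∈ range M, q i * f i) ≤
      (∑ i ∈ range M, q' i * f i) * (∑ i ∈ range M, q i * f i * R i) := by
  rw [wt_abel (fun i => q' i * f i), wt_abel (fun i => q i * f i), sum_mul, mul_sum]
  apply sum_le_sum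
  intro a _
  have := wt_hr q q' f M hq h hs hf hf0 a
  nlinarith [wt_inc_nonneg hR hR0 a, mul_le_mul_of_nonneg_left this (wt_inc_nonneg hR hR0 a)]

theorem wt_chain (q : ℕ → ℕ → ℝ) (C : ℕ → ℕ → ℝ) (M : ℕ) (hq : ∀ n i, 0 ≤ q n i)
    (hC0 : ∀ i j, i ≤ j → C i j = 0)
    (hC1 : ∀ j, Monotone (fun i => C i j))
    (hC2 : ∀ j, Monotone (fun i => C i (j+1) / C i j))
    (hCz : ∀ i j, C i j = 0 → C i (j+1) = 0)
    (ht : ∀ n j, ∑ i ∈ Ico j M, q (n+1) i = ∑ i ∈ range M, q n i * C i j)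
    (hbase0 : ∀ a b, a ≤ b → b < M → (∑ i ∈ Ico b M, q 1 i) * (∑ i ∈ Ico a M, q 0 i) ≤
      (∑ i ∈ Ico a M, q 1 i) * (∑ i ∈ Ico b M, q 0 i)) (n : ℕ) :
    (∑ i ∈ range M, q (n+2) i) * (∑ i ∈ range M, q n i) ≤ (∑ i ∈ range M, q (n+1) i) ^ 2 := by
  have hs : ∀ n b, ∑ i ∈ Ico b M, q n i = 0 → ∑ i ∈ Ico b M, q (n+1) i = 0 := by
    intro n b h
    rw [ht]
    apply sum_eq_zero
    intro i hi
    rcases le_total i b with hib | hib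
    · rw [hC0 i b hib, mul_zero]
    · rw [(sum_eq_zero_iff_of_nonneg (fun i _ => hq n i)).1 h i (by simp at hi ⊢; omega), zero_mul]
  have inv : ∀ n a b, a ≤ b → (∑ i ∈ Ico b M, q (n+1) i) * (∑ i ∈ Ico a M, q n i) ≤
      (∑ i ∈ Ico a M, q (n+1) i) * (∑ i ∈ Ico b M, q n i) := by
    intro n
    induction n with
    | zero =>
      intro a b hab
      rcases lt_or_ge b M with hb | hb
      · exact hbase0 a b hab hb
      · rw [Ico_eq_empty_of_le hb]; simp
    | succ n ih =>
      have step : ∀ j, (∑ i ∈ Ico (j+1) M, q (n+2) i) * (∑ i ∈ Ico j M, q (n+1) i) ≤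
          (∑ i ∈ Ico j M, q (n+2) i) * (∑ i ∈ Ico (j+1) M, q (n+1) i) := by
        intro j
        have := wt_hr2 (q n) (q (n+1)) (fun i => C i j) (fun i => C i (j+1) / C i j) M (hq n) ih
          (hs n) (hC1 j) (by simp [hC0]) (hC2 j) (by simp [hC0])
        have e : ∀ (i : ℕ) (t : ℝ), t * C i j * (C i (j+1) / C i j) = t * C i (j+1) := by
          intro i t
          by_cases h : C i j = 0
          · simp [h, hCz i j h]
          · field_simp
        simp only [e] at this
        rw [ht (n+1), ht n, ht (n+1), ht n]
        exact this
      intro a b hab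
      induction b, hab using Nat.le_induction with
      | base => exact le_rfl
      | succ b hab ihb =>
        have hb0 : 0 ≤ ∑ i ∈ Ico b M, q (n+1) i := sum_nonneg fun i _ => hq _ i
        have hb1 : 0 ≤ ∑ i ∈ Ico (b+1) M, q (n+1) i := sum_nonneg fun i _ => hq _ i
        have ha0 : 0 ≤ ∑ i ∈ Ico a M, q (n+1) i := sum_nonneg fun i _ => hq _ i
        have hle : ∑ i ∈ Ico (b+1) M, q (n+1) i ≤ ∑ i ∈ Ico b M, q (n+1) i :=
          sum_le_sum_of_subset_of_nonneg (Ico_subset_Ico_left (Nat.le_succ b)) (fun i _ _ => hq _ i)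
        rcases hb0.eq_or_lt with h0 | h0
        · have h1 : ∑ i ∈ Ico (b+1) M, q (n+1) i = 0 := by linarith
          rw [hs _ _ h1, h1]; simp
        · have s := step b
          refine le_of_mul_le_mul_right ?_ h0
          have s1 := mul_le_mul_of_nonneg_right s ha0
          have s2 := mul_le_mul_of_nonneg_right ihb hb1
          linarith
  have fin := wt_hr2 (q n) (q (n+1)) (fun _ => 1) (fun i => C i 0) M (hq n) (inv n) (hs n)
    monotone_const zero_le_one (hC1 0) (by simp [hC0])
  simp only [mul_one] at fin
  rw [← ht (n+1), ← ht n] at fin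
  simp only [← range_eq_Ico] at fin
  rw [pow_two]; exact fin

/-- coefficients of `(1-X)^(-s)` -/
noncomputable def wtc (s : ℝ) : ℕ → ℝ
  | 0 => 1
  | (n+1) => wtc s n * ((s + n) / (n + 1))

lemma wtc_succ (s : ℝ) (n : ℕ) : wtc s (n+1) = wtc s n * ((s + n) / (n + 1)) := rfl

lemma wtc_eq (s : ℝ) (n : ℕ) : wtc s n = (-1) ^ n * Ring.choose (-s) n := by
  have h : ∀ n : ℕ, (n.factorial : ℝ) * wtc s n = (-1) ^ n * (descPochhammer ℤ n).smeval (-s) := by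
    intro n
    induction n with
    | zero => simp [wtc]
    | succ n ih =>
      rw [wtc_succ, Nat.factorial_succ, descPochhammer_succ_right, Polynomial.smeval_mul,
        Polynomial.smeval_sub, Polynomial.smeval_X, Polynomial.smeval_natCast]
      push_cast
      have : ((n:ℝ) + 1) ≠ 0 := by positivity
      field_simp
      rw [ih]
      simp
      ring
  have h2 := h n
  rw [Ring.descPochhammer_eq_factorial_smul_choose, nsmul_eq_mul] at h2
  have : (n.factorial : ℝ) ≠ 0 := by positivity
  apply mul_left_cancel₀ this
  rw [h2]; ring

/-- the power series `(1-X)^(-s)` -/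
noncomputable def wtP (s : ℝ) : PowerSeries ℝ := PowerSeries.mk (wtc s)

lemma wtP_add (s t : ℝ) : wtP (s + t) = wtP s * wtP t := by
  ext N
  rw [PowerSeries.coeff_mul]
  simp only [wtP, PowerSeries.coeff_mk]
  rw [wtc_eq, neg_add, Ring.add_choose_eq _ (Commute.all _ _), mul_sum]
  apply sum_congr rfl
  intro p hp
  rw [wtc_eq, wtc_eq, ← mem_antidiagonal.1 hp, pow_add]
  ring

lemma wtP_zero : wtP 0 = 1 := by
  ext N
  cases N with
  | zero => simp [wtP, wtc]
  | succ n =>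
    have : ∀ n, wtc 0 (n+1) = 0 := by
      intro n
      induction n with
      | zero => simp [wtc]
      | succ n ih => rw [wtc_succ, ih, zero_mul]
    simp [wtP, this, PowerSeries.coeff_one]

lemma wtP_pow (s : ℝ) (k : ℕ) : wtP s ^ k = wtP (k * s) := by
  induction k with
  | zero => simp [wtP_zero]
  | succ k ih => rw [pow_succ, ih, ← wtP_add]; congr 1; push_cast; ring

/-- Sibuya weights -/
noncomputable def wtw (α : ℝ) (m : ℕ) : ℝ := if m = 0 then 0 else - wtc (-α) m

lemma wtw_mk (α : ℝ) : PowerSeries.mk (wtw α) = 1 - wtP (-α) := by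
  ext m
  cases m with
  | zero => simp [wtw, wtP, wtc]
  | succ m => simp [wtw, wtP, PowerSeries.coeff_one]

lemma wtw_succ (α : ℝ) (m : ℕ) (hm : 1 ≤ m) : wtw α (m+1) = wtw α m * ((m - α) / (m+1)) := by
  have : m ≠ 0 := by omega
  simp only [wtw, this, wtc_succ, if_false, Nat.succ_ne_zero]
  ring

lemma wtw_pos {α : ℝ} (h0 : 0 < α) (h1 : α < 1) (m : ℕ) (hm : 1 ≤ m) : 0 < wtw α m := by
  induction m, hm using Nat.le_induction with
  | base => simpa [wtw, wtc] using h0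
  | succ m hm ih =>
    rw [wtw_succ α m hm]
    have : (1:ℝ) ≤ m := by exact_mod_cast hm
    have : 0 < (m:ℝ) - α := by linarith
    positivity

lemma wtw_nonneg {α : ℝ} (h0 : 0 < α) (h1 : α < 1) (m : ℕ) : 0 ≤ wtw α m := by
  rcases Nat.eq_zero_or_pos m with h | h
  · simp [wtw, h]
  · exact (wtw_pos h0 h1 m h).le

lemma wtw_anti {α : ℝ} (h0 : 0 < α) (h1 : α < 1) (m : ℕ) (hm : 1 ≤ m) : wtw α (m+1) ≤ wtw α m := by
  rw [wtw_succ α m hm]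
  apply mul_le_of_le_one_right (wtw_nonneg h0 h1 m)
  rw [div_le_one (by positivity)]
  linarith

/-- `w(d+1)/w(d)` is increasing -/
lemma wt_ratio_le {α : ℝ} (h0 : 0 < α) {m n : ℕ} (h : m ≤ n) :
    ((m:ℝ) - α) / (m+1) ≤ (n - α) / (n+1) := by
  have : (m:ℝ) ≤ n := by exact_mod_cast h
  rw [div_le_div_iff₀ (by positivity) (by positivity)]
  nlinarith

lemma wtc_nonneg {s : ℝ} (h : 0 ≤ s) (n : ℕ) : 0 ≤ wtc s n := by
  induction n with
  | zero => simp [wtc]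
  | succ n ih => rw [wtc_succ]; positivity

lemma wtc_pos {s : ℝ} (h : 0 < s) (n : ℕ) : 0 < wtc s n := by
  induction n with
  | zero => simp [wtc]
  | succ n ih => rw [wtc_succ]; positivity

lemma wtc_le {s t : ℝ} (hs : 0 ≤ s) (h : s ≤ t) (n : ℕ) : wtc s n ≤ wtc t n := by
  induction n with
  | zero => simp [wtc]
  | succ n ih =>
    rw [wtc_succ, wtc_succ]
    have := wtc_nonneg hs n
    have := wtc_nonneg (hs.trans h) n
    gcongr

noncomputable def wtB (α γ : ℝ) (i j : ℕ) : ℝ := ∑ l ∈ Ico j i, wtc γ l * wtw α (i - l)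

lemma wtB_zero (α γ : ℝ) (i : ℕ) : wtB α γ i 0 = wtc γ i - wtc (γ - α) i := by
  have h : PowerSeries.coeff i (wtP γ * PowerSeries.mk (wtw α)) = wtc γ i - wtc (γ - α) i := by
    rw [wtw_mk, mul_sub, mul_one, ← wtP_add]
    simp [wtP, sub_eq_add_neg]
  rw [← h, PowerSeries.coeff_mul,
    Finset.Nat.sum_antidiagonal_eq_sum_range_succ_mk, sum_range_succ]
  simp [wtB, wtw, wtP]

lemma wtB_eq (α γ : ℝ) (i j : ℕ) (h : j ≤ i) :
    wtB α γ i j = wtc γ i - wtc (γ - α) i - ∑ l ∈ range j, wtc γ l * wtw α (i - l) := by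
  rw [← wtB_zero, wtB, wtB, ← range_eq_Ico, ← sum_range_add_sum_Ico _ h]
  ring

lemma wtB_nonneg {α γ : ℝ} (h0 : 0 < α) (h1 : α < 1) (hγ : α ≤ γ) (i j : ℕ) : 0 ≤ wtB α γ i j :=
  sum_nonneg fun l _ => mul_nonneg (wtc_nonneg (h0.le.trans hγ) l) (wtw_nonneg h0 h1 _)

lemma wtB_empty (α γ : ℝ) {i j : ℕ} (h : i ≤ j) : wtB α γ i j = 0 := by
  simp [wtB, Ico_eq_empty_of_le h]

lemma wtB_pos {α γ : ℝ} (h0 : 0 < α) (h1 : α < 1) (hγ : α ≤ γ) {i j : ℕ} (h : j < i) :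
    0 < wtB α γ i j := by
  unfold wtB
  apply Finset.sum_pos
  · intro l hl
    simp at hl
    exact mul_pos (wtc_pos (h0.trans_le hγ) l) (wtw_pos h0 h1 _ (by omega))
  · simpa using h

/-- monotonicity of `C` -/
lemma wtC_mono {α γ : ℝ} (h0 : 0 < α) (h1 : α < 1) (hγ : α ≤ γ) (j : ℕ) :
    Monotone (fun i => wtB α γ i j / wtc γ i) := by
  have hg : 0 < γ := h0.trans_le hγ
  apply monotone_nat_of_le_succ
  intro i
  rcases le_or_gt i j with h | h
  · rw [wtB_empty α γ h, zero_div]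
    exact div_nonneg (wtB_nonneg h0 h1 hγ _ _) (wtc_nonneg hg.le _)
  have e : ∀ i, j ≤ i → wtB α γ i j / wtc γ i =
      1 - wtc (γ - α) i / wtc γ i - ∑ l ∈ range j, wtc γ l * (wtw α (i - l) / wtc γ i) := by
    intro i hi
    have := (wtc_pos hg i).ne'
    rw [wtB_eq _ _ _ _ hi, sub_div, sub_div, div_self this, sum_div]
    simp only [mul_div_assoc]
  rw [e i h.le, e (i+1) (by omega)]
  have p1 := wtc_pos hg i
  have a1 : wtc (γ - α) (i+1) / wtc γ (i+1) ≤ wtc (γ - α) i / wtc γ i := by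
    have p2 := wtc_nonneg (s := γ - α) (by linarith) i
    rw [wtc_succ, wtc_succ, mul_div_mul_comm]
    apply mul_le_of_le_one_right (by positivity)
    rw [div_div_div_cancel_right₀ (by positivity), div_le_one (by positivity)]
    linarith
  have a2 : ∑ l ∈ range j, wtc γ l * (wtw α (i + 1 - l) / wtc γ (i+1)) ≤
      ∑ l ∈ range j, wtc γ l * (wtw α (i - l) / wtc γ i) := by
    apply sum_le_sum
    intro l hl
    simp at hl
    apply mul_le_mul_of_nonneg_left _ (wtc_nonneg hg.le l)
    have p3 := wtw_nonneg h0 h1 (i - l)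
    rw [show i + 1 - l = (i - l) + 1 by omega, wtw_succ _ _ (by omega), wtc_succ, mul_div_mul_comm]
    apply mul_le_of_le_one_right (by positivity)
    rw [div_le_one (by positivity)]
    refine (wt_ratio_le h0 (Nat.sub_le i l)).trans ?_
    gcongr
    linarith
  linarith

lemma wt_claimS {α γ : ℝ} (h0 : 0 < α) (h1 : α < 1) (hγ : α ≤ γ) {d a : ℕ} (h : a < d) :
    wtw α (d+1) * wtB α γ d a ≤ wtw α d * wtB α γ (d+1) a := by
  have hg : 0 < γ := h0.trans_le hγ
  rw [wtB_eq _ _ _ _ h.le, wtB_eq _ _ _ _ (h.le.trans (Nat.le_succ d))]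
  have hd := wtw_nonneg h0 h1 d
  have a1 : wtw α (d+1) * (wtc γ d - wtc (γ - α) d) ≤
      wtw α d * (wtc γ (d+1) - wtc (γ - α) (d+1)) := by
    rw [wtw_succ _ _ (by omega), mul_assoc, wtc_succ, wtc_succ]
    apply mul_le_mul_of_nonneg_left _ hd
    have p2 := wtc_nonneg (s := γ - α) (by linarith) d
    have p3 := wtc_le (s := γ - α) (t := γ) (by linarith) (by linarith) d
    have : (0:ℝ) < d + 1 := by positivity
    rw [div_mul_eq_mul_div, mul_div_assoc', mul_div_assoc', ← sub_div]
    gcongr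
    nlinarith
  have a2 : wtw α d * ∑ l ∈ range a, wtc γ l * wtw α (d + 1 - l) ≤
     wtw α (d+1) * ∑ l ∈ range a, wtc γ l * wtw α (d - l) := by
    rw [mul_sum, mul_sum]
    apply sum_le_sum
    intro l hl
    simp at hl
    have p := wtc_nonneg hg.le l
    have p3 := wtw_nonneg h0 h1 (d - l)
    rw [show d + 1 - l = (d - l) + 1 by omega, wtw_succ _ _ (by omega), wtw_succ α d (by omega)]
    have := mul_le_mul_of_nonneg_left (wt_ratio_le h0 (Nat.sub_le d l))
      (mul_nonneg hd (mul_nonneg p p3))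
    linarith
  linarith

lemma wt_claimE {α γ : ℝ} (h0 : 0 < α) (h1 : α < 1) (hγ : α ≤ γ) (j d : ℕ) (hd : 1 ≤ d) :
    wtw α (d+1) * wtB α γ (j+d) j ≤ wtw α d * wtB α γ (j+d+1) j := by
  have hg : 0 < γ := h0.trans_le hγ
  have e : ∀ d, wtB α γ (j+d) j = ∑ l ∈ range d, wtc γ (j+l) * wtw α (d - l) := by
    intro d
    rw [wtB, sum_Ico_eq_sum_range]
    simp only [Nat.add_sub_cancel_left]
    apply sum_congr rfl
    intro l _
    congr 2
    omega
  rw [add_assoc, e, e]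
  have wd := wtw_pos h0 h1 d hd
  rcases le_total 1 γ with h | h
  · rw [sum_range_succ', mul_add]
    have t : 0 ≤ wtw α d * (wtc γ (j+0) * wtw α (d+1-0)) :=
      mul_nonneg wd.le (mul_nonneg (wtc_nonneg hg.le _) (wtw_nonneg h0 h1 _))
    have : wtw α (d+1) * ∑ l ∈ range d, wtc γ (j+l) * wtw α (d-l) ≤
        wtw α d * ∑ l ∈ range d, wtc γ (j+(l+1)) * wtw α (d+1-(l+1)) := by
      apply mul_le_mul (wtw_anti h0 h1 d hd) _ _ wd.le
      · apply sum_le_sum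
        intro l _
        rw [Nat.add_sub_add_right]
        apply mul_le_mul_of_nonneg_right _ (wtw_nonneg h0 h1 _)
        rw [← add_assoc, wtc_succ]
        apply le_mul_of_one_le_right (wtc_nonneg hg.le _)
        rw [one_le_div (by positivity)]
        linarith
      · exact sum_nonneg fun l _ => mul_nonneg (wtc_nonneg hg.le _) (wtw_nonneg h0 h1 _)
    linarith
  · set ρ : ℕ → ℝ := fun l => wtc γ (j+l) / wtc γ l with hρ
    have hmono : Monotone ρ := by
      apply monotone_nat_of_le_succ
      intro l
      have p1 := wtc_pos hg l
      have p2 := wtc_pos hg (j+l)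
      simp only [hρ]
      rw [← add_assoc, wtc_succ, wtc_succ, mul_div_mul_comm]
      apply le_mul_of_one_le_right (by positivity)
      rw [one_le_div (by positivity), div_le_div_iff₀ (by positivity) (by positivity)]
      push_cast
      have : (0:ℝ) ≤ j := by positivity
      nlinarith
    have hρ0 : 0 ≤ ρ 0 := div_nonneg (wtc_nonneg hg.le _) (wtc_nonneg hg.le _)
    have e2 : ∀ d, ∑ l ∈ range d, wtc γ (j+l) * wtw α (d - l) =
        ∑ a ∈ range d, wtInc ρ a * wtB α γ d a := by
      intro d
      rw [show (∑ a ∈ range d, wtInc ρ a * wtB α γ d a) = _ from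
        (wt_abel (fun l => wtc γ l * wtw α (d - l)) ρ d).symm]
      apply sum_congr rfl
      intro l _
      simp only [hρ]
      have := (wtc_pos hg l).ne'
      field_simp
    rw [e2, e2, sum_range_succ, mul_add]
    have t : 0 ≤ wtw α d * (wtInc ρ d * wtB α γ (d+1) d) :=
      mul_nonneg wd.le (mul_nonneg (wt_inc_nonneg hmono hρ0 d) (wtB_nonneg h0 h1 hγ _ _))
    have : wtw α (d+1) * ∑ a ∈ range d, wtInc ρ a * wtB α γ d a ≤
        wtw α d * ∑ a ∈ range d, wtInc ρ a * wtB α γ (d+1) a := by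
      rw [mul_sum, mul_sum]
      apply sum_le_sum
      intro a ha
      have := mul_le_mul_of_nonneg_left (wt_claimS h0 h1 hγ (mem_range.1 ha))
        (wt_inc_nonneg hmono hρ0 a)
      linarith
    linarith

lemma wtC_ratio {α γ : ℝ} (h0 : 0 < α) (h1 : α < 1) (hγ : α ≤ γ) (j : ℕ) :
    Monotone (fun i => (wtB α γ i (j+1) / wtc γ i) / (wtB α γ i j / wtc γ i)) := by
  have hg : 0 < γ := h0.trans_le hγ
  have e : (fun i => (wtB α γ i (j+1) / wtc γ i) / (wtB α γ i j / wtc γ i)) =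
      fun i => wtB α γ i (j+1) / wtB α γ i j := by
    ext i
    rw [div_div_div_cancel_right₀ (wtc_pos hg i).ne']
  rw [e]
  apply monotone_nat_of_le_succ
  intro i
  rcases le_or_gt i (j+1) with h | h
  · rw [wtB_empty α γ h, zero_div]
    exact div_nonneg (wtB_nonneg h0 h1 hγ _ _) (wtB_nonneg h0 h1 hγ _ _)
  rw [div_le_div_iff₀ (wtB_pos h0 h1 hγ (by omega)) (wtB_pos h0 h1 hγ (by omega))]
  have s : ∀ i, j < i → wtB α γ i j = wtc γ j * wtw α (i - j) + wtB α γ i (j+1) := by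
    intro i hi
    rw [wtB, sum_eq_sum_Ico_succ_bot hi]; rfl
  have c := wt_claimE h0 h1 hγ j (i - j) (by omega)
  rw [show j + (i - j) = i by omega, show i - j + 1 = i + 1 - j by omega] at c
  have s1 := s i (by omega)
  have s2 := s (i+1) (by omega)
  have c2 := mul_le_mul_of_nonneg_left c (wtc_pos hg j).le
  have t1 : wtB α γ i (j+1) = wtB α γ i j - wtc γ j * wtw α (i - j) := by linarith
  have t2 : wtB α γ (i+1) (j+1) = wtB α γ (i+1) j - wtc γ j * wtw α (i + 1 - j) := by linarith
  rw [t1, t2]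
  linarith

noncomputable def wtp (α : ℝ) (n m : ℕ) : ℝ := PowerSeries.coeff m (PowerSeries.mk (wtw α) ^ n)

lemma wtp_succ (α : ℝ) (n m : ℕ) :
    wtp α (n+1) m = ∑ k ∈ range (m+1), wtw α k * wtp α n (m-k) := by
  rw [wtp, pow_succ', PowerSeries.coeff_mul, Finset.Nat.sum_antidiagonal_eq_sum_range_succ_mk]
  simp [wtp]

lemma wtp_nonneg {α : ℝ} (h0 : 0 < α) (h1 : α < 1) (n m : ℕ) : 0 ≤ wtp α n m := by
  induction n generalizing m with
  | zero => simp [wtp, PowerSeries.coeff_one]; split_ifs <;> norm_num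
  | succ n ih =>
    rw [wtp_succ]
    exact sum_nonneg fun k _ => mul_nonneg (wtw_nonneg h0 h1 k) (ih _)

noncomputable def wtT (α : ℝ) (N n : ℕ) (s : ℝ) : ℝ :=
  PowerSeries.coeff N (PowerSeries.mk (wtw α) ^ n * wtP s)

lemma wtT_succ (α : ℝ) (N n : ℕ) (s : ℝ) :
    wtT α N (n+1) s = wtT α N n s - wtT α N n (s - α) := by
  rw [wtT, wtT, wtT, ← map_sub, pow_succ, mul_assoc, ← mul_sub, wtw_mk, sub_mul, one_mul,
    ← wtP_add, show -α + s = s - α by ring]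

lemma wtT_sum (α : ℝ) (N n : ℕ) (s : ℝ) :
    wtT α N n s = ∑ i ∈ range (N+1), wtp α n (N - i) * wtc s i := by
  rw [wtT, mul_comm, PowerSeries.coeff_mul, Finset.Nat.sum_antidiagonal_eq_sum_range_succ_mk]
  simp [wtp, wtP, mul_comm]

theorem wtT_logconcave {α γ : ℝ} (h0 : 0 < α) (h1 : α < 1) (hγ : α ≤ γ) (N n : ℕ) :
    wtT α N (n+2) γ * wtT α N n γ ≤ wtT α N (n+1) γ ^ 2 := by
  have hg : 0 < γ := h0.trans_le hγ
  simp only [wtT_sum]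
  have hq : ∀ n i, 0 ≤ wtp α n (N - i) * wtc γ i :=
    fun n i => mul_nonneg (wtp_nonneg h0 h1 _ _) (wtc_nonneg hg.le _)
  apply wt_chain (fun n i => wtp α n (N - i) * wtc γ i) (fun i j => wtB α γ i j / wtc γ i) (N+1) hq
  · intro i j h
    simp only [wtB_empty α γ h, zero_div]
  · exact wtC_mono h0 h1 hγ
  · exact wtC_ratio h0 h1 hγ
  · intro i j h
    have h' : wtB α γ i j = 0 := by
      rcases div_eq_zero_iff.1 h with h | h
      · exact h
      · exact absurd h (wtc_pos hg i).ne'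
    have : i ≤ j := by
      by_contra hc
      exact (wtB_pos h0 h1 hγ (not_le.1 hc)).ne' h'
    simp only [wtB_empty α γ (this.trans (Nat.le_succ j)), zero_div]
  · intro n j
    have e1 : ∀ l ∈ Ico j (N+1), wtp α (n+1) (N-l) * wtc γ l =
        ∑ i ∈ range (N+1), if l < i then wtp α n (N-i) * (wtc γ l * wtw α (i-l)) else 0 := by
      intro l hl
      have hl : j ≤ l ∧ l < N + 1 := by simpa using hl
      rw [wtp_succ, sum_mul, ← sum_filter]
      have : (range (N+1)).filter (fun i => l < i) = Ico (l+1) (N+1) := by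
        ext i; simp; omega
      rw [this, sum_Ico_eq_sum_range, sum_range_succ', show N + 1 - (l+1) = N - l by omega]
      simp only [wtw, if_true, zero_mul, add_zero]
      apply sum_congr rfl
      intro k _
      rw [show N - (l + 1 + k) = N - l - (k+1) by omega, show l + 1 + k - l = k + 1 by omega]
      ring
    have e2 : ∀ i ∈ range (N+1), wtp α n (N - i) * wtc γ i * (wtB α γ i j / wtc γ i) =
        ∑ l ∈ Ico j (N+1), if l < i then wtp α n (N-i) * (wtc γ l * wtw α (i-l)) else 0 := by
      intro i hi
      have hi : i < N + 1 := by simpa using hi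
      have := (wtc_pos hg i).ne'
      rw [← sum_filter, ← mul_sum, wtB]
      have e : (Ico j (N+1)).filter (fun l => l < i) = Ico j i := by
        ext l; simp; omega
      rw [e]
      field_simp
    rw [sum_congr rfl e1, sum_congr rfl e2, sum_comm]
  · intro a b hab hb
    have e : ∀ b, b < N + 1 → ∑ i ∈ Ico b (N+1), wtp α 0 (N-i) * wtc γ i = wtc γ N := by
      intro b hb
      rw [sum_eq_single N]
      · simp [wtp]
      · intro i hi hne
        have hi : b ≤ i ∧ i < N + 1 := by simpa using hi
        have : N - i ≠ 0 := by omega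
        simp [wtp, PowerSeries.coeff_one, this]
      · intro h; exact absurd (by simp; omega) h
    rw [e b hb, e a (by omega)]
    apply mul_le_mul_of_nonneg_right _ (wtc_nonneg hg.le _)
    exact sum_le_sum_of_subset_of_nonneg (Ico_subset_Ico_left hab) (fun i _ _ => hq _ i)

theorem wtT_turan {α β : ℝ} (h0 : 0 < α) (h1 : α < 1) (hβ : 0 ≤ β) (N n : ℕ) :
    wtT α N n (β + α) * wtT α N n (β - α) ≤ wtT α N n β ^ 2 := by
  have h := wtT_logconcave h0 h1 (show α ≤ β + α by linarith) N n
  rw [wtT_succ α N (n+1), wtT_succ α N n, wtT_succ α N n, show β + α - α = β by ring] at h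
  nlinarith

lemma wtT_explicit (α : ℝ) (N n : ℕ) (s : ℝ) :
    wtT α N n s = ∑ k ∈ range (n+1), (-1)^k * (n.choose k : ℝ) * wtc (s - α * k) N := by
  rw [wtT, wtw_mk, sub_eq_neg_add, add_pow, sum_mul, map_sum]
  apply sum_congr rfl
  intro k _
  rw [neg_pow, wtP_pow, one_pow, mul_one, mul_assoc, mul_assoc, mul_comm ((n.choose k : ℕ) : PowerSeries ℝ),
    ← mul_assoc (wtP _), ← wtP_add]
  have : ((-1 : PowerSeries ℝ) ^ k * (wtP (k * -α + s) * ((n.choose k : ℕ) : PowerSeries ℝ))) =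
    PowerSeries.C ((-1)^k * (n.choose k : ℝ)) * wtP (k * -α + s) := by
    simp; ring
  rw [this, PowerSeries.coeff_C_mul, wtP, PowerSeries.coeff_mk]
  congr 2
  ring

open Filter Topology

lemma wtc_prod (s : ℝ) (N : ℕ) : wtc s N = ∏ j ∈ range N, (1 - (1 - s) / ((j:ℝ) + 1)) := by
  induction N with
  | zero => simp [wtc]
  | succ N ih =>
    rw [wtc_succ, prod_range_succ, ih]
    congr 1
    have : (N:ℝ) + 1 ≠ 0 := by positivity
    field_simp
    ring

lemma wtc_prod2 (s : ℝ) (N : ℕ) :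
    ∏ j ∈ range (N+1), (s + j) = wtc s N * (N.factorial : ℝ) * (s + N) := by
  induction N with
  | zero => simp [wtc]
  | succ N ih =>
    rw [prod_range_succ, ih, wtc_succ, Nat.factorial_succ]
    have : (N:ℝ) + 1 ≠ 0 := by positivity
    push_cast
    field_simp

lemma wtc_zero_of_neg (m N : ℕ) (h : m < N) : wtc (-(m:ℝ)) N = 0 := by
  induction N, h using Nat.le_induction with
  | base => simp [wtc_succ]
  | succ N h ih => rw [wtc_succ, ih, zero_mul]

lemma wtc_tendsto (s : ℝ) :
    Tendsto (fun N : ℕ => wtc s N * (N:ℝ) ^ (1 - s)) atTop (𝓝 (Real.Gamma s)⁻¹) := by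
  by_cases hs : ∃ m : ℕ, s = -m
  · obtain ⟨m, rfl⟩ := hs
    rw [(Real.Gamma_eq_zero_iff _).2 ⟨m, rfl⟩, inv_zero]
    apply tendsto_const_nhds.congr'
    filter_upwards [eventually_gt_atTop m] with N hN
    rw [wtc_zero_of_neg m N hN, zero_mul]
  · push Not at hs
    have h1 := (Real.GammaSeq_tendsto_Gamma s).inv₀ (Real.Gamma_ne_zero hs)
    have h2 : Tendsto (fun N : ℕ => (N:ℝ) / (N + s)) atTop (𝓝 1) := tendsto_natCast_div_add_atTop s
    have h3 := h1.mul h2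
    rw [mul_one] at h3
    apply h3.congr'
    filter_upwards [eventually_gt_atTop 0] with N hN
    have hN' : (0:ℝ) < N := by exact_mod_cast hN
    have hne : s + N ≠ 0 := by
      intro h; exact hs N (by linarith)
    have hne' : (N:ℝ) + s ≠ 0 := by rwa [add_comm]
    rw [Real.GammaSeq, wtc_prod2, Real.rpow_sub hN', Real.rpow_one]
    have : (N.factorial : ℝ) ≠ 0 := by positivity
    have : (N:ℝ) ^ s ≠ 0 := (Real.rpow_pos_of_pos hN' s).ne'
    field_simp
    ring

noncomputable def wtg (τ : ℝ) (j : ℕ) : ℝ :=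
  if (j:ℝ) + 1 ≤ τ then τ / (j+1) + Real.log (τ / (j+1)) else 0

lemma wtg_nonneg (τ : ℝ) (j : ℕ) : 0 ≤ wtg τ j := by
  unfold wtg
  split_ifs with h
  · have h1 : 1 ≤ τ / (j+1) := by rwa [one_le_div (by positivity)]
    have := Real.log_nonneg h1
    linarith
  · exact le_rfl

lemma wt_factor (τ : ℝ) (j : ℕ) :
    |1 - τ / ((j:ℝ) + 1)| ≤ Real.exp (-(τ / (j+1)) + wtg τ j) := by
  unfold wtg
  split_ifs with h
  · have h1 : 1 ≤ τ / ((j:ℝ)+1) := by rwa [one_le_div (by positivity)]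
    rw [neg_add_cancel_left, Real.exp_log (by linarith), abs_of_nonpos (by linarith)]
    linarith
  · have h1 : τ / ((j:ℝ)+1) ≤ 1 := by
      rw [div_le_one (by positivity)]; linarith
    rw [abs_of_nonneg (by linarith), add_zero]
    linarith [Real.add_one_le_exp (-(τ / ((j:ℝ)+1)))]

lemma wt_harm (N : ℕ) : ∑ j ∈ range N, (1:ℝ) / (j+1) = (harmonic N : ℝ) := by
  simp [harmonic]

lemma wtg_sum (τ T : ℝ) (h1 : 1 ≤ T) (hT : |τ| ≤ T) (N : ℕ) :
    ∑ j ∈ range N, wtg τ j ≤ 2 * T + T * Real.log T := by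
  have hlT := Real.log_nonneg h1
  have hτT : τ ≤ T := (le_abs_self τ).trans hT
  rcases lt_or_ge τ 1 with h | h
  · have : ∑ j ∈ range N, wtg τ j = 0 := by
      apply sum_eq_zero
      intro j _
      have : (0:ℝ) ≤ j := by positivity
      rw [wtg, if_neg (by linarith)]
    rw [this]; positivity
  set m := ⌊τ⌋₊ with hm
  have hm1 : 1 ≤ m := Nat.le_floor (by simpa using h)
  have hmτ : (m:ℝ) ≤ τ := Nat.floor_le (by linarith)
  have a1 : ∑ j ∈ range N, wtg τ j ≤ ∑ j ∈ range (max N m), wtg τ j :=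
    sum_le_sum_of_subset_of_nonneg (by simp) (fun j _ _ => wtg_nonneg τ j)
  have a2 : ∑ j ∈ range m, wtg τ j = ∑ j ∈ range (max N m), wtg τ j := by
    apply sum_subset (by simp)
    intro j _ hj
    have hj : m ≤ j := by simpa using hj
    rw [wtg, if_neg]
    intro hc
    have := Nat.le_floor (n := j+1) (a := τ) (by push_cast; exact hc)
    omega
  have a3 : ∑ j ∈ range m, wtg τ j = ∑ j ∈ range m, (τ / (j+1) + Real.log (τ / (j+1))) := by
    apply sum_congr rfl
    intro j hj
    have hj : j + 1 ≤ m := by simpa using hj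
    have : ((j:ℝ)+1) ≤ m := by exact_mod_cast hj
    rw [wtg, if_pos (by linarith)]
  have a4 : ∑ j ∈ range m, τ / ((j:ℝ)+1) ≤ T * (1 + Real.log T) := by
    have : ∑ j ∈ range m, τ / ((j:ℝ)+1) = τ * (harmonic m : ℝ) := by
      rw [← wt_harm, mul_sum]
      apply sum_congr rfl; intros; ring
    rw [this]
    have hh := harmonic_le_one_add_log m
    have : Real.log m ≤ Real.log T := Real.log_le_log (by exact_mod_cast hm1) (by linarith)
    apply mul_le_mul hτT (by linarith) _ (by linarith)
    exact_mod_cast (harmonic_pos (by omega)).le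
  have a5 : ∑ j ∈ range m, Real.log (τ / ((j:ℝ)+1)) ≤ T := by
    have pos : ∀ j : ℕ, 0 < τ / ((j:ℝ)+1) := fun j => by positivity
    rw [← Real.log_prod (fun j _ => (pos j).ne')]
    have e : ∏ j ∈ range m, (τ / ((j:ℝ)+1)) = τ ^ m / m.factorial := by
      rw [prod_div_distrib, prod_const, card_range, ← prod_range_add_one_eq_factorial]
      push_cast; rfl
    rw [e]
    have := Real.pow_div_factorial_le_exp τ (by linarith) m
    calc Real.log (τ ^ m / m.factorial) ≤ Real.log (Real.exp τ) :=
          Real.log_le_log (by positivity) this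
      _ = τ := Real.log_exp τ
      _ ≤ T := hτT
  rw [sum_add_distrib] at a3
  linarith

lemma wtc_bound (s T : ℝ) (h1 : 1 ≤ T) (hT : |1 - s| ≤ T) (N : ℕ) (hN : 1 ≤ N) :
    |wtc s N| * (N:ℝ) ^ (1 - s) ≤ Real.exp (3 * T + T * Real.log T) := by
  have hN' : (0:ℝ) < N := by exact_mod_cast hN
  set τ := 1 - s with hτ
  have b1 : |wtc s N| ≤ Real.exp (- τ * (harmonic N : ℝ) + ∑ j ∈ range N, wtg τ j) := by
    rw [wtc_prod, abs_prod, ← wt_harm, mul_sum, ← sum_add_distrib, Real.exp_sum]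
    apply prod_le_prod (fun _ _ => abs_nonneg _)
    intro j _
    refine (wt_factor τ j).trans (le_of_eq ?_)
    congr 1; ring
  rw [Real.rpow_def_of_pos hN']
  calc _ ≤ Real.exp (- τ * (harmonic N : ℝ) + ∑ j ∈ range N, wtg τ j) *
        Real.exp (Real.log N * τ) := by gcongr
    _ ≤ _ := by
      rw [← Real.exp_add]
      apply Real.exp_le_exp.2
      have g := wtg_sum τ T h1 hT N
      have u1 := harmonic_le_one_add_log N
      have u2 := log_add_one_le_harmonic N
      have u3 : Real.log N ≤ Real.log ((N+1 : ℕ):ℝ) := Real.log_le_log hN' (by push_cast; linarith)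
      have : - τ * (harmonic N : ℝ) + Real.log N * τ ≤ T := by
        have e : - τ * (harmonic N : ℝ) + Real.log N * τ = -τ * ((harmonic N : ℝ) - Real.log N) := by
          ring
        rw [e]
        have l1 : -τ ≤ T := (neg_le_abs τ).trans hT
        have l2 : 0 ≤ (harmonic N : ℝ) - Real.log N := by linarith
        have l3 : (harmonic N : ℝ) - Real.log N ≤ 1 := by linarith
        nlinarith
      linarith

lemma wt_summable (α B x : ℝ) (h0 : 0 < α) (h1 : α < 1) (hB : 1 ≤ B) (hx : 0 ≤ x) :
    Summable (fun k : ℕ => x ^ k / k.factorial *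
      Real.exp (3 * (α * k + B) + (α * k + B) * Real.log (α * k + B))) := by
  set c := Real.log (α + B) with hc
  have hc0 : 0 ≤ c := Real.log_nonneg (by linarith)
  set D := x + 1 + 3 * (α + B) + (α + B) * c + B with hD
  have hlim : Tendsto (fun k : ℕ => (1 - α) * Real.log (k:ℝ)) atTop atTop :=
    (Real.tendsto_log_atTop.comp tendsto_natCast_atTop_atTop).const_mul_atTop (by linarith)
  have hgeo : Summable (fun k : ℕ => (Real.exp (-1)) ^ k) :=
    summable_geometric_of_lt_one (Real.exp_pos _).le (by rw [Real.exp_lt_one_iff]; norm_num)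
  refine Summable.of_norm_bounded_eventually_nat hgeo ?_
  filter_upwards [hlim.eventually_ge_atTop (D + 1), eventually_ge_atTop 1] with k hk hk1
  have hk' : (1:ℝ) ≤ k := by exact_mod_cast hk1
  have hkp : (0:ℝ) < k := by linarith
  have L0 : 0 ≤ Real.log k := Real.log_nonneg hk'
  have L1 : Real.log k ≤ k := by linarith [Real.log_le_sub_one_of_pos hkp]
  rw [Real.norm_of_nonneg (by positivity)]
  have f1 : (k:ℝ) ^ k / k.factorial ≤ Real.exp k := Real.pow_div_factorial_le_exp k hkp.le k
  have f2 : (1:ℝ) / k.factorial ≤ Real.exp (k - k * Real.log k) := by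
    rw [Real.exp_sub, mul_comm, ← Real.rpow_def_of_pos hkp, Real.rpow_natCast,
      le_div_iff₀ (by positivity)]
    calc _ = (k:ℝ) ^ k / k.factorial := by ring
      _ ≤ _ := f1
  have f3 : x ^ k ≤ Real.exp (x * k) := by
    rw [mul_comm, Real.exp_nat_mul]
    gcongr
    linarith [Real.add_one_le_exp x]
  have hT1 : 1 ≤ α * k + B := by nlinarith
  have hT : α * k + B ≤ (α + B) * k := by nlinarith
  have hlT : Real.log (α * k + B) ≤ c + Real.log k := by
    rw [hc, ← Real.log_mul (by linarith) hkp.ne']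
    exact Real.log_le_log (by linarith) hT
  calc x ^ k / k.factorial * Real.exp (3 * (α * k + B) + (α * k + B) * Real.log (α * k + B))
      = x ^ k * (1 / k.factorial) *
        Real.exp (3 * (α * k + B) + (α * k + B) * Real.log (α * k + B)) := by ring
    _ ≤ Real.exp (x * k) * Real.exp (k - k * Real.log k) *
        Real.exp (3 * (α * k + B) + (α * k + B) * Real.log (α * k + B)) := by gcongr
    _ = Real.exp (x * k + (k - k * Real.log k) +
        (3 * (α * k + B) + (α * k + B) * Real.log (α * k + B))) := by
        rw [← Real.exp_add, ← Real.exp_add]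
    _ ≤ Real.exp (k * (-1)) := by
        apply Real.exp_le_exp.2
        have m1 : (α * k + B) * Real.log (α * k + B) ≤ (α * k + B) * (c + Real.log k) :=
          mul_le_mul_of_nonneg_left hlT (by linarith)
        have m2 : (α * k + B) * c ≤ (α + B) * k * c := mul_le_mul_of_nonneg_right hT hc0
        have m3 : B * Real.log k ≤ B * k := mul_le_mul_of_nonneg_left L1 (by linarith)
        have m4 : (D + 1) * k ≤ (1 - α) * Real.log k * k := mul_le_mul_of_nonneg_right hk hkp.le
        have m5 : D * k = x * k + k + 3 * ((α + B) * k) + (α + B) * k * c + B * k := by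
          rw [hD]; ring
        nlinarith
    _ = _ := by rw [Real.exp_nat_mul]

lemma wt_choose_tendsto (α x : ℝ) (h0 : 0 < α) (hx : 0 ≤ x) (k : ℕ) :
    Tendsto (fun N : ℕ => ((⌊x * (N:ℝ) ^ α⌋₊.choose k : ℕ) : ℝ) / ((N:ℝ) ^ α) ^ k) atTop
      (𝓝 (x ^ k / k.factorial)) := by
  have hpow : Tendsto (fun N : ℕ => (N:ℝ) ^ α) atTop atTop :=
    (tendsto_rpow_atTop h0).comp tendsto_natCast_atTop_atTop
  induction k with
  | zero => simp
  | succ k ih =>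
    have hfl : Tendsto (fun N : ℕ => (⌊x * (N:ℝ) ^ α⌋₊ : ℝ) / (N:ℝ) ^ α) atTop (𝓝 x) :=
      (tendsto_nat_floor_mul_div_atTop hx).comp hpow
    have hk : Tendsto (fun N : ℕ => (k:ℝ) / (N:ℝ) ^ α) atTop (𝓝 0) :=
      tendsto_const_nhds.div_atTop hpow
    have h := (ih.mul (hfl.sub hk)).div_const ((k:ℝ) + 1)
    have e : x ^ k / (k.factorial : ℝ) * (x - 0) / ((k:ℝ) + 1) = x ^ (k+1) / (k+1).factorial := by
      rw [Nat.factorial_succ]; push_cast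
      have : (k.factorial : ℝ) ≠ 0 := by positivity
      field_simp
      ring
    rw [e] at h
    apply h.congr'
    filter_upwards [eventually_gt_atTop 0] with N hN
    have hN' : (0:ℝ) < N := by exact_mod_cast hN
    have hp := Real.rpow_pos_of_pos hN' α
    set n := ⌊x * (N:ℝ) ^ α⌋₊
    have hc : ((n.choose (k+1) : ℕ) : ℝ) * (k+1) = (n.choose k : ℝ) * ((n:ℝ) - k) := by
      rcases le_or_gt k n with hkn | hkn
      · rw [← Nat.cast_sub hkn]
        exact_mod_cast Nat.choose_succ_right_eq n k
      · rw [Nat.choose_eq_zero_of_lt hkn, Nat.choose_eq_zero_of_lt (by omega)]; simp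
    have : ((n.choose (k+1) : ℕ) : ℝ) = (n.choose k : ℝ) * ((n:ℝ) - k) / (k+1) := by
      rw [← hc]; field_simp
    rw [this]
    field_simp
    ring

theorem wtT_tendsto (α s x : ℝ) (h0 : 0 < α) (h1 : α < 1) (hx : 0 ≤ x) :
    Tendsto (fun N : ℕ => wtT α N ⌊x * (N:ℝ) ^ α⌋₊ s * (N:ℝ) ^ (1 - s)) atTop
      (𝓝 (wright (-α) s (-x))) := by
  set B := |1 - s| + 1 with hB
  set f : ℕ → ℕ → ℝ := fun N k => (-1) ^ k *
    (((⌊x * (N:ℝ) ^ α⌋₊.choose k : ℕ) : ℝ) / ((N:ℝ) ^ α) ^ k) *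
    (wtc (s - α * k) N * (N:ℝ) ^ (1 - (s - α * k))) with hf
  have main : Tendsto (fun N => ∑' k, f N k) atTop (𝓝 (wright (-α) s (-x))) := by
    unfold wright
    apply tendsto_tsum_of_dominated_convergence
      (wt_summable α B x h0 h1 (by rw [hB]; linarith [abs_nonneg (1 - s)]) hx)
    · intro k
      have := ((wt_choose_tendsto α x h0 hx k).const_mul ((-1) ^ k)).mul (wtc_tendsto (s - α * k))
      convert this using 2
      rw [neg_pow, show s + -α * (k:ℝ) = s - α * k by ring, div_eq_mul_inv, mul_inv, div_eq_mul_inv]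
      ring
    · filter_upwards [eventually_ge_atTop 1] with N hN k
      have hN' : (0:ℝ) < N := by exact_mod_cast hN
      have hp := Real.rpow_pos_of_pos hN' α
      simp only [hf]
      rw [norm_mul, norm_mul, norm_pow, norm_neg, norm_one, one_pow, one_mul]
      have hk0 : (0:ℝ) ≤ k := by positivity
      have hTk : |1 - (s - α * k)| ≤ α * k + B := by
        rw [show 1 - (s - α * k) = α * k + (1 - s) by ring]
        refine (abs_add_le _ _).trans ?_
        rw [abs_of_nonneg (by positivity), hB]; linarith
      have hT1 : 1 ≤ α * k + B := by
        rw [hB]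
        have := abs_nonneg (1 - s)
        have : 0 ≤ α * k := by positivity
        linarith
      apply mul_le_mul _ _ (norm_nonneg _) (by positivity)
      · rw [Real.norm_of_nonneg (by positivity), div_le_iff₀ (by positivity)]
        calc ((⌊x * (N:ℝ) ^ α⌋₊.choose k : ℕ) : ℝ) ≤ (⌊x * (N:ℝ) ^ α⌋₊ : ℝ) ^ k / k.factorial :=
              Nat.choose_le_pow_div k _
          _ ≤ (x * (N:ℝ) ^ α) ^ k / k.factorial := by
              gcongr
              exact Nat.floor_le (by positivity)
          _ = _ := by rw [mul_pow]; ring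
      · rw [norm_mul, Real.norm_eq_abs, Real.norm_of_nonneg (by positivity)]
        exact wtc_bound _ _ hT1 hTk N hN
  apply main.congr'
  filter_upwards [eventually_ge_atTop 1] with N hN
  have hN' : (0:ℝ) < N := by exact_mod_cast hN
  rw [wtT_explicit, sum_mul]
  rw [tsum_eq_sum (s := range (⌊x * (N:ℝ) ^ α⌋₊ + 1))]
  · apply sum_congr rfl
    intro k _
    simp only [hf]
    have e : (N:ℝ) ^ (1 - (s - α * k)) = (N:ℝ) ^ (1 - s) * ((N:ℝ) ^ α) ^ k := by
      rw [← Real.rpow_mul_natCast hN'.le, ← Real.rpow_add hN']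
      congr 1; ring
    rw [e]
    have := (Real.rpow_pos_of_pos hN' α).ne'
    field_simp
  · intro k hk
    have hk : ⌊x * (N:ℝ) ^ α⌋₊ < k := by simpa using hk
    simp only [hf]
    rw [Nat.choose_eq_zero_of_lt hk]
    simp

/-- Turán-type inequality for the Wright function: for `α ∈ (0,1)`, `β ≥ 0` and
`x ≥ 0`, `φ(-α, β+α, -x) · φ(-α, β-α, -x) ≤ φ(-α, β, -x)²`. -/
theorem wright_turan (α β x : ℝ) (hα : α ∈ Set.Ioo (0 : ℝ) 1) (hβ : 0 ≤ β)
    (hx : 0 ≤ x) :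
    wright (-α) (β + α) (-x) * wright (-α) (β - α) (-x) ≤ wright (-α) β (-x) ^ 2 := by
  obtain ⟨h0, h1⟩ := hα
  refine le_of_tendsto_of_tendsto
    ((wtT_tendsto α (β + α) x h0 h1 hx).mul (wtT_tendsto α (β - α) x h0 h1 hx))
    ((wtT_tendsto α β x h0 h1 hx).pow 2) ?_
  filter_upwards [eventually_ge_atTop 1] with N hN
  have hN' : (0:ℝ) < N := by exact_mod_cast hN
  have e : (N:ℝ) ^ (1 - (β + α)) * (N:ℝ) ^ (1 - (β - α)) = ((N:ℝ) ^ (1 - β)) ^ 2 := by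
    rw [pow_two, ← Real.rpow_add hN', ← Real.rpow_add hN']
    congr 1; ring
  have t := mul_le_mul_of_nonneg_right (wtT_turan h0 h1 hβ N ⌊x * (N:ℝ) ^ α⌋₊)
    (sq_nonneg ((N:ℝ) ^ (1 - β)))
  rw [mul_pow]
  refine le_trans (le_of_eq ?_) t
  rw [← e]; ring
end
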